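/- arXiv:1908.08592 — 2 statements merged into one kernel-verified Lean document; each statement's English description precedes it below -/
import Mathlib

section
/- (Characterization of cyclicity.) Let a > 0 be real and b ∈ ℂ with Re(b) ≥ 0, and let φ(w) = a·w + b, an affine self-map of ℂ₊. Then the composition operator C_φ is cyclic on H²(ℂ₊) — i.e. there exists f ∈ H²(ℂ₊) such that the linear span of the orbit {f ∘ φ^[n] : n ∈ ℕ} is dense in H²(ℂ₊) — if and only if a ≥ 1 and Re(b) > 0. -/
open Complex MeasureTheory

/-- The square of the `H²(ℂ₊)` norm: `sup_{x>0} ∫ |f(x+iy)|² dy`, valued in `ℝ≥0∞`. -/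
noncomputable def H2normSq (f : ℂ → ℂ) : ENNReal :=
  ⨆ x ∈ Set.Ioi (0 : ℝ), ∫⁻ y : ℝ, (‖f ((x : ℂ) + (y : ℂ) * Complex.I)‖₊ : ENNReal) ^ 2

/-- Membership in the Hardy space `H²(ℂ₊)` of the right half-plane. -/
def MemH2 (f : ℂ → ℂ) : Prop :=
  DifferentiableOn ℂ f {w : ℂ | 0 < w.re} ∧ H2normSq f < ⊤


open scoped FourierTransform ENNReal NNReal SchwartzMap

/-- restriction to a vertical line -/
noncomputable def vline (f : ℂ → ℂ) (x : ℝ) : ℝ → ℂ := fun y => f ((x : ℂ) + (y : ℂ) * Complex.I)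

/-- norm bound -/
def H2b (f : ℂ → ℂ) (M : ℝ) : Prop := 0 ≤ M ∧ ∀ x : ℝ, 0 < x → eLpNorm (vline f x) 2 volume ≤ ENNReal.ofReal M

lemma eLpNorm_two_sq {α : Type*} [MeasurableSpace α] (μ : Measure α) (g : α → ℂ) :
    eLpNorm g 2 μ ^ 2 = ∫⁻ y, (‖g y‖₊ : ENNReal) ^ 2 ∂μ := by
  have := eLpNorm_nnreal_pow_eq_lintegral (μ := μ) (f := g) (p := 2) (by norm_num)
  simpa [enorm] using this

lemma H2normSq_eq (f : ℂ → ℂ) : H2normSq f = ⨆ x ∈ Set.Ioi (0 : ℝ), eLpNorm (vline f x) 2 volume ^ 2 := by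
  simp only [H2normSq, eLpNorm_two_sq, vline]

lemma H2b.sq_le {f : ℂ → ℂ} {M : ℝ} (h : H2b f M) : H2normSq f ≤ ENNReal.ofReal M ^ 2 := by
  rw [H2normSq_eq]
  refine iSup₂_le fun x hx => ?_
  gcongr
  exact h.2 x hx

lemma H2b_of_sq_le {f : ℂ → ℂ} {M : ℝ} (hM : 0 ≤ M) (h : H2normSq f ≤ ENNReal.ofReal M ^ 2) : H2b f M := by
  refine ⟨hM, fun x hx => ?_⟩
  rw [H2normSq_eq] at h
  have := (le_iSup₂ (f := fun (x : ℝ) (_ : x ∈ Set.Ioi (0:ℝ)) => eLpNorm (vline f x) 2 volume ^ 2) x hx).trans h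
  exact (ENNReal.pow_le_pow_left_iff two_ne_zero).1 this

lemma memH2_iff {f : ℂ → ℂ} : MemH2 f ↔ DifferentiableOn ℂ f {w : ℂ | 0 < w.re} ∧ ∃ M, H2b f M := by
  refine and_congr_right fun _ => ⟨fun h => ?_, fun ⟨M, h⟩ => h.sq_le.trans_lt (by finiteness)⟩
  refine ⟨Real.sqrt (H2normSq f).toReal, H2b_of_sq_le (Real.sqrt_nonneg _) ?_⟩
  rw [← ENNReal.ofReal_pow (Real.sqrt_nonneg _), Real.sq_sqrt ENNReal.toReal_nonneg, ENNReal.ofReal_toReal h.ne]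

lemma H2b.lt {f : ℂ → ℂ} {M : ℝ} (h : H2b f M) {ε : ℝ} (hε : M < ε) : H2normSq f < ENNReal.ofReal ε ^ 2 := by
  refine h.sq_le.trans_lt ?_
  have : ENNReal.ofReal M < ENNReal.ofReal ε := (ENNReal.ofReal_lt_ofReal_iff_of_nonneg h.1).2 hε
  exact ENNReal.pow_lt_pow_left two_ne_zero this

lemma vline_cont {f : ℂ → ℂ} (hf : ContinuousOn f {w : ℂ | 0 < w.re}) {x : ℝ} (hx : 0 < x) :
    Continuous (vline f x) := by
  refine hf.comp_continuous (by fun_prop) fun y => ?_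
  simpa using hx

lemma H2b.memLp {f : ℂ → ℂ} {M : ℝ} (h : H2b f M) (hf : ContinuousOn f {w : ℂ | 0 < w.re}) {x : ℝ} (hx : 0 < x) :
    MemLp (vline f x) 2 volume :=
  ⟨(vline_cont hf hx).aestronglyMeasurable, (h.2 x hx).trans_lt ENNReal.ofReal_lt_top⟩

lemma H2b.add {f g : ℂ → ℂ} {M M' : ℝ} (h : H2b f M) (h' : H2b g M') (hf : ContinuousOn f {w : ℂ | 0 < w.re})
   (hg : ContinuousOn g {w : ℂ | 0 < w.re}) : H2b (f + g) (M + M') := by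
  refine ⟨add_nonneg h.1 h'.1, fun x hx => ?_⟩
  rw [ENNReal.ofReal_add h.1 h'.1]
  exact (eLpNorm_add_le (vline_cont hf hx).aestronglyMeasurable (vline_cont hg hx).aestronglyMeasurable
    (by norm_num)).trans (add_le_add (h.2 x hx) (h'.2 x hx))

lemma H2b.smul {f : ℂ → ℂ} {M : ℝ} (h : H2b f M) (c : ℂ) : H2b (c • f) (‖c‖ * M) := by
  refine ⟨mul_nonneg (norm_nonneg _) h.1, fun x hx => ?_⟩
  rw [ENNReal.ofReal_mul (norm_nonneg _)]
  refine (eLpNorm_const_smul_le (c := c) (f := vline f x)).trans ?_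
  rw [ofReal_norm]
  gcongr
  exact h.2 x hx

lemma MemH2.add {f g : ℂ → ℂ} (hf : MemH2 f) (hg : MemH2 g) : MemH2 (f + g) := by
  rw [memH2_iff] at *
  obtain ⟨d, M, h⟩ := hf
  obtain ⟨d', M', h'⟩ := hg
  exact ⟨d.add d', _, h.add h' d.continuousOn d'.continuousOn⟩

lemma MemH2.smul {f : ℂ → ℂ} (hf : MemH2 f) (c : ℂ) : MemH2 (c • f) := by
  rw [memH2_iff] at *
  obtain ⟨d, M, h⟩ := hf
  exact ⟨d.const_smul c, _, h.smul c⟩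

lemma MemH2.zero : MemH2 0 := by
  refine memH2_iff.2 ⟨differentiableOn_const 0, 0, le_rfl, fun x hx => ?_⟩
  have : vline 0 x = 0 := rfl
  simp [this]

lemma MemH2.sub {f g : ℂ → ℂ} (hf : MemH2 f) (hg : MemH2 g) : MemH2 (f - g) := by
  have := hf.add (hg.smul (-1))
  simpa [sub_eq_add_neg] using this

lemma H2b.sub {f g : ℂ → ℂ} {M M' : ℝ} (h : H2b f M) (h' : H2b g M') (hf : ContinuousOn f {w : ℂ | 0 < w.re})
   (hg : ContinuousOn g {w : ℂ | 0 < w.re}) : H2b (f - g) (M + M') := by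
  have := h.add (h'.smul (-1)) hf (hg.const_smul (-1 : ℂ))
  simpa [sub_eq_add_neg] using this

/-- The space as a submodule. -/
def H2sub : Submodule ℂ (ℂ → ℂ) where
  carrier := {f | MemH2 f}
  add_mem' := fun h h' => h.add h'
  zero_mem' := MemH2.zero
  smul_mem' := fun c _ h => h.smul c

lemma mem_H2sub {f : ℂ → ℂ} : f ∈ H2sub ↔ MemH2 f := Iff.rfl

/-- Plancherel on L¹ ∩ L². -/
lemma plancherel {f : ℝ → ℂ} (h1 : Integrable f) (h2 : MemLp f 2 volume) :
    eLpNorm (𝓕 f) 2 volume = eLpNorm f 2 volume := by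
  set F : Lp ℂ 2 (volume : Measure ℝ) := h2.toLp f with hF
  have key : (𝓕 F : Lp ℂ 2 (volume : Measure ℝ)) =ᵐ[volume] 𝓕 f := by
    have hcont : Continuous (𝓕 f) := by
      exact VectorFourier.fourierIntegral_continuous Real.continuous_fourierChar (by exact continuous_inner) h1
    have hl : LocallyIntegrable ((𝓕 F : Lp ℂ 2 (volume : Measure ℝ))) volume :=
      (Lp.memLp _).locallyIntegrable (by norm_num)
    refine ae_eq_of_integral_contDiff_smul_eq hl hcont.locallyIntegrable ?_
    intro g hg hgs
    have hgs' : HasCompactSupport (fun x => (g x : ℂ)) := hgs.comp_left (g := fun x : ℝ => (x : ℂ)) rfl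
    have hg' : ContDiff ℝ (⊤ : ℕ∞) (fun x => (g x : ℂ)) := Complex.ofRealCLM.contDiff.comp hg
    let φ : 𝓢(ℝ, ℂ) := hgs'.toSchwartzMap hg'
    have e1 := congrArg (fun T => T φ) (Lp.fourier_toTemperedDistribution_eq F)
    simp only [TemperedDistribution.fourier_apply, Lp.toTemperedDistribution_apply] at e1
    have e2 : ∀ x, g x • (𝓕 F : Lp ℂ 2 (volume : Measure ℝ)) x = φ x • (𝓕 F : Lp ℂ 2 (volume : Measure ℝ)) x := by
      intro x
      simp [φ]
    have e3 : ∀ x, g x • (𝓕 f) x = φ x • (𝓕 f) x := by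
      intro x
      simp [φ]
    simp_rw [e2, e3]
    rw [← e1]
    have e4 : ∫ x, (𝓕 φ) x • F x = ∫ x, (𝓕 φ) x • f x := by
      refine integral_congr_ae ?_
      filter_upwards [h2.coeFn_toLp] with x hx
      rw [hx]
    rw [e4]
    have := VectorFourier.integral_fourierIntegral_smul_eq_flip (μ := volume) (ν := volume) (L := innerₗ ℝ) (e := Real.fourierChar) (f := φ) (g := f) Real.continuous_fourierChar (by exact continuous_inner) φ.integrable h1
    rw [flip_innerₗ] at this
    exact this
  rw [← eLpNorm_congr_ae key, ← eLpNorm_congr_ae h2.coeFn_toLp]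
  have := Lp.norm_fourier_eq F
  rw [Lp.norm_def, Lp.norm_def] at this
  rwa [ENNReal.toReal_eq_toReal_iff' (Lp.eLpNorm_ne_top _) (Lp.eLpNorm_ne_top _)] at this



lemma lintegral_affine (g : ℝ → ℝ≥0∞) {a : ℝ} (ha : a ≠ 0) (c : ℝ) :
    ∫⁻ y, g (a * y + c) = ENNReal.ofReal |a⁻¹| * ∫⁻ y, g y := by
  have h1 : ∫⁻ y, g (a * y + c) = ∫⁻ y, g (y + c) ∂(Measure.map (a * ·) volume) := by
    exact (((Homeomorph.mulLeft₀ a ha).measurableEmbedding).lintegral_map (μ := volume) (fun y => g (y + c))).symm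
  rw [h1, Real.map_volume_mul_left ha, lintegral_smul_measure, lintegral_add_right_eq_self g c, smul_eq_mul]

lemma cs {α : Type*} [MeasurableSpace α] {μ : Measure α} {f g : α → ℂ} (hf : AEStronglyMeasurable f μ)
    (hg : AEStronglyMeasurable g μ) :
    ∫⁻ y, ‖f y * g y‖ₑ ∂μ ≤ eLpNorm f 2 μ * eLpNorm g 2 μ := by
  have := eLpNorm_smul_le_mul_eLpNorm (p := 2) (q := 2) (r := 1) hg hf
  rwa [eLpNorm_one_eq_lintegral_enorm] at this

lemma cs_integral {α : Type*} [MeasurableSpace α] {μ : Measure α} {f g : α → ℂ} (hf : MemLp f 2 μ)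
    (hg : MemLp g 2 μ) : ‖∫ y, f y * g y ∂μ‖ ≤ (eLpNorm f 2 μ).toReal * (eLpNorm g 2 μ).toReal := by
  rw [← ENNReal.toReal_mul, ← toReal_enorm]
  refine ENNReal.toReal_mono (ENNReal.mul_ne_top hf.2.ne hg.2.ne) ?_
  exact (enorm_integral_le_lintegral_enorm _).trans (cs hf.1 hg.1)

lemma cs_integrable {α : Type*} [MeasurableSpace α] {μ : Measure α} {f g : α → ℂ} (hf : MemLp f 2 μ)
    (hg : MemLp g 2 μ) : Integrable (fun y => f y * g y) μ := by
  exact MemLp.integrable_mul hf hg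

lemma eLpNorm_affine (g : ℝ → ℂ) {a : ℝ} (ha : a ≠ 0) (c : ℝ) :
    eLpNorm (fun y => g (a * y + c)) 2 volume ^ 2 = ENNReal.ofReal |a⁻¹| * eLpNorm g 2 volume ^ 2 := by
  rw [eLpNorm_two_sq, eLpNorm_two_sq]
  exact lintegral_affine (fun y => (‖g y‖₊ : ENNReal) ^ 2) ha c

/-- Laplace transform -/
noncomputable def lap (F : ℝ → ℂ) (w : ℂ) : ℂ := ∫ t in Set.Ioi (0:ℝ), cexp (-w * t) * F t

/-- Lebesgue measure on the half line -/
noncomputable abbrev hmeas : Measure ℝ := volume.restrict (Set.Ioi (0:ℝ))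

lemma lintegral_exp_neg {c : ℝ} (hc : 0 < c) :
    ∫⁻ t in Set.Ioi (0:ℝ), ENNReal.ofReal (Real.exp (-c * t)) = ENNReal.ofReal c⁻¹ := by
  rw [← ofReal_integral_eq_lintegral_ofReal]
  · congr 1
    rw [integral_exp_mul_Ioi (by linarith)]
    simp
  · exact integrableOn_exp_mul_Ioi (by linarith) 0
  · exact Filter.Eventually.of_forall fun t => (Real.exp_pos _).le

lemma eLpNorm_exp {w : ℂ} (hw : 0 < w.re) :
    eLpNorm (fun t : ℝ => cexp (-w * t)) 2 hmeas ^ 2 = ENNReal.ofReal (2 * w.re)⁻¹ := by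
  rw [eLpNorm_two_sq, ← lintegral_exp_neg (by linarith)]
  refine lintegral_congr fun t => ?_
  rw [← enorm_eq_nnnorm, ← ofReal_norm, ← ENNReal.ofReal_pow (norm_nonneg _), Complex.norm_exp, ← Real.exp_nat_mul]
  congr 2
  simp
  ring

lemma memLp_exp {w : ℂ} (hw : 0 < w.re) : MemLp (fun t : ℝ => cexp (-w * t)) 2 hmeas := by
  refine ⟨by fun_prop, ?_⟩
  have := eLpNorm_exp hw
  by_contra h
  simp only [not_lt, top_le_iff] at h
  rw [h] at this
  simp at this

lemma lap_bound {F : ℝ → ℂ} (hF : MemLp F 2 hmeas) {x : ℝ} (hx : 0 < x) :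
    eLpNorm (vline (lap F) x) 2 volume ≤ ENNReal.ofReal (Real.sqrt (2 * Real.pi) * (eLpNorm F 2 hmeas).toReal) := by
  set G : ℝ → ℂ := (Set.Ioi (0:ℝ)).indicator (fun t => cexp (-(x:ℂ) * t) * F t) with hG
  have m1 : Integrable G := by
    rw [hG, integrable_indicator_iff measurableSet_Ioi]
    exact cs_integrable (memLp_exp (by simpa using hx)) hF
  have aes : AEStronglyMeasurable (fun t : ℝ => cexp (-(x:ℂ) * t) * F t) hmeas :=
    (by fun_prop : Continuous (fun t : ℝ => cexp (-(x:ℂ) * t))).aestronglyMeasurable.mul hF.1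
  have le : eLpNorm G 2 volume ≤ eLpNorm F 2 hmeas := by
    rw [hG, eLpNorm_indicator_eq_eLpNorm_restrict measurableSet_Ioi]
    refine eLpNorm_mono_ae ?_
    filter_upwards [ae_restrict_mem measurableSet_Ioi] with t ht
    rw [norm_mul, Complex.norm_exp]
    refine mul_le_of_le_one_left (norm_nonneg _) (Real.exp_le_one_iff.2 ?_)
    simp only [Set.mem_Ioi] at ht
    simp
    positivity
  have m2 : MemLp G 2 volume := ⟨m1.1, le.trans_lt hF.2⟩
  have e : vline (lap F) x = fun y => (𝓕 G) ((2 * Real.pi)⁻¹ * y + 0) := by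
    ext y
    rw [vline, lap, Real.fourier_real_eq_integral_exp_smul, ← integral_indicator measurableSet_Ioi]
    refine integral_congr_ae (Filter.Eventually.of_forall fun t => ?_)
    by_cases ht : t ∈ Set.Ioi (0:ℝ)
    · simp only [hG, Set.indicator_of_mem ht, smul_eq_mul]
      rw [← mul_assoc, ← Complex.exp_add]
      congr 2
      push_cast
      have : (Real.pi : ℂ) ≠ 0 := by exact_mod_cast Real.pi_ne_zero
      field_simp
      ring
    · simp [hG, Set.indicator_of_notMem ht]
  have h2 : eLpNorm (vline (lap F) x) 2 volume ^ 2 ≤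
     ENNReal.ofReal (Real.sqrt (2 * Real.pi) * (eLpNorm F 2 hmeas).toReal) ^ 2 := by
    rw [e, eLpNorm_affine (𝓕 G) (by positivity) 0, plancherel m1 m2, ENNReal.ofReal_mul (by positivity),
      ENNReal.ofReal_toReal hF.2.ne, mul_pow, ← ENNReal.ofReal_pow (by positivity), Real.sq_sqrt (by positivity),
      inv_inv, abs_of_pos (by positivity)]
    gcongr
  exact (ENNReal.pow_le_pow_left_iff two_ne_zero).1 h2

lemma lap_H2b {F : ℝ → ℂ} (hF : MemLp F 2 hmeas) : H2b (lap F) (Real.sqrt (2 * Real.pi) * (eLpNorm F 2 hmeas).toReal) :=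
  ⟨by positivity, fun _ hx => lap_bound hF hx⟩

lemma lap_exp {μ w : ℂ} (h : 0 < (w + μ).re) : lap (fun t => cexp (-μ * t)) w = (w + μ)⁻¹ := by
  rw [lap]
  simp_rw [← Complex.exp_add, ← add_mul]
  rw [integral_exp_mul_complex_Ioi (by simp at h ⊢; linarith)]
  simp
  rw [← neg_add, neg_div_neg_eq, one_div]



lemma tendsto_zero_of_lintegral {E : ℝ → ℂ} {l : ℂ} {T0 : ℝ} (hE : Filter.Tendsto E Filter.atTop (nhds l))
    (hI : ∫⁻ T in Set.Ioi T0, ‖E T‖ₑ < ⊤) : l = 0 := by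
  by_contra hl
  have hpos : 0 < ‖l‖ := norm_pos_iff.2 hl
  have h1 : ∀ᶠ T in Filter.atTop, ‖l‖ / 2 < ‖E T‖ := hE.norm.eventually_const_lt (by linarith)
  obtain ⟨T1, hT1⟩ := Filter.eventually_atTop.1 h1
  have h2 : ∫⁻ T in Set.Ioi (max T0 T1), ENNReal.ofReal (‖l‖ / 2) ≤ ∫⁻ T in Set.Ioi T0, ‖E T‖ₑ := by
    calc _ ≤ ∫⁻ T in Set.Ioi (max T0 T1), ‖E T‖ₑ := by
          refine setLIntegral_mono' measurableSet_Ioi fun T hT => ?_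
          rw [← ofReal_norm]
          refine ENNReal.ofReal_le_ofReal (hT1 T ?_).le
          exact (le_max_right T0 T1).trans (le_of_lt hT)
      _ ≤ _ := lintegral_mono_set (Set.Ioi_subset_Ioi (le_max_left _ _))
  have h3 : ∫⁻ T in Set.Ioi (max T0 T1), ENNReal.ofReal (‖l‖ / 2) = ⊤ := by
    rw [setLIntegral_const, Real.volume_Ioi, ENNReal.mul_top]
    simpa using hl
  rw [h3] at h2
  exact absurd (lt_of_le_of_lt h2 hI) (lt_irrefl _)

/-- A holomorphic function with controlled vertical integrals has equal integrals over vertical lines. -/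
lemma contour {q : ℂ → ℂ} {s x X T0 : ℝ} {K : ℝ≥0∞} (hK : K < ⊤) (hs : s < x) (hX : x ≤ X)
    (hq : DifferentiableOn ℂ q {w : ℂ | s < w.re})
    (hb : ∀ u ∈ Set.Ioc x X, ∫⁻ T in Set.Ioi T0, ‖q (u + T * I)‖ₑ ≤ K)
    (hb' : ∀ u ∈ Set.Ioc x X, ∫⁻ T in Set.Ioi T0, ‖q (u + (-T : ℝ) * I)‖ₑ ≤ K)
    (i1 : Integrable (vline q x)) (i2 : Integrable (vline q X)) :
    ∫ y, vline q x y = ∫ y, vline q X y := by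
  have rect : ∀ T : ℝ, 0 < T → (∫ u in x..X, q (u + (-T : ℝ) * I)) - (∫ u in x..X, q (u + T * I)) +
      I • (∫ y in (-T)..T, vline q X y) - I • (∫ y in (-T)..T, vline q x y) = 0 := by
    intro T hT
    have := Complex.integral_boundary_rect_eq_zero_of_differentiableOn q ⟨x, -T⟩ ⟨X, T⟩ ?_
    · simpa only [vline] using this
    · refine hq.mono fun z hz => ?_
      rw [mem_reProdIm] at hz
      have := hz.1
      simp only [Set.uIcc_of_le hX] at this
      exact hs.trans_le this.1
  set E : ℝ → ℂ := fun T => (∫ u in x..X, q (u + (-T : ℝ) * I)) - (∫ u in x..X, q (u + T * I)) with hE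
  have lim : Filter.Tendsto E Filter.atTop (nhds (I • (∫ y, vline q x y) - I • (∫ y, vline q X y))) := by
    have l1 := intervalIntegral_tendsto_integral i1 Filter.tendsto_neg_atTop_atBot Filter.tendsto_id
    have l2 := intervalIntegral_tendsto_integral i2 Filter.tendsto_neg_atTop_atBot Filter.tendsto_id
    refine ((l1.const_smul I).sub (l2.const_smul I)).congr' ?_
    filter_upwards [Filter.eventually_gt_atTop 0] with T hT
    have := rect T hT
    simp only [hE, id]
    linear_combination -this
  have meas : ∀ g : ℝ → ℝ, Continuous g → AEMeasurable (fun p : ℝ × ℝ => ‖q (p.2 + (g p.1 : ℝ) * I)‖ₑ)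
      ((volume.restrict (Set.Ioi T0)).prod (volume.restrict (Set.Ioc x X))) := by
    intro g hg
    rw [Measure.prod_restrict]
    have : ContinuousOn (fun p : ℝ × ℝ => ‖q (p.2 + (g p.1 : ℝ) * I)‖ₑ) (Set.Ioi T0 ×ˢ Set.Ioc x X) := by
      refine continuous_enorm.comp_continuousOn (hq.continuousOn.comp (by fun_prop) fun p hp => ?_)
      simpa using hs.trans hp.2.1
    exact this.aemeasurable (measurableSet_Ioi.prod measurableSet_Ioc)
  have bd : ∀ g : ℝ → ℝ, Continuous g → (∀ u ∈ Set.Ioc x X, ∫⁻ T in Set.Ioi T0, ‖q (u + (g T : ℝ) * I)‖ₑ ≤ K) →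
      ∫⁻ T in Set.Ioi T0, ‖∫ u in x..X, q (u + (g T : ℝ) * I)‖ₑ ≤ K * ENNReal.ofReal (X - x) := by
    intro g hg h
    calc _ ≤ ∫⁻ T in Set.Ioi T0, ∫⁻ u in Set.Ioc x X, ‖q (u + (g T : ℝ) * I)‖ₑ := by
          refine lintegral_mono fun T => ?_
          rw [intervalIntegral.integral_of_le hX]
          exact enorm_integral_le_lintegral_enorm _
      _ = ∫⁻ u in Set.Ioc x X, ∫⁻ T in Set.Ioi T0, ‖q (u + (g T : ℝ) * I)‖ₑ :=
          lintegral_lintegral_swap (meas g hg)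
      _ ≤ ∫⁻ u in Set.Ioc x X, K := setLIntegral_mono' measurableSet_Ioc h
      _ = _ := by rw [setLIntegral_const, Real.volume_Ioc]
  have aem : ∀ g : ℝ → ℝ, Continuous g → AEMeasurable (fun T : ℝ => ‖∫ u in x..X, q (u + (g T : ℝ) * I)‖ₑ) (volume.restrict (Set.Ioi T0)) := by
    intro g hg
    simp_rw [intervalIntegral.integral_of_le hX]
    refine AEMeasurable.enorm ?_
    have : ContinuousOn (fun p : ℝ × ℝ => q (p.2 + (g p.1 : ℝ) * I)) (Set.Ioi T0 ×ˢ Set.Ioc x X) := by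
      refine (hq.continuousOn.comp (by fun_prop) fun p hp => ?_)
      simpa using hs.trans hp.2.1
    have h2 := this.aestronglyMeasurable (μ := volume) (measurableSet_Ioi.prod measurableSet_Ioc)
    rw [Measure.volume_eq_prod, ← Measure.prod_restrict] at h2
    exact h2.integral_prod_right'.aemeasurable
  have fin : ∫⁻ T in Set.Ioi T0, ‖E T‖ₑ < ⊤ := by
    have b1 := bd (fun T => -T) (by fun_prop) hb'
    have b2 := bd (fun T => T) (by fun_prop) hb
    calc _ ≤ ∫⁻ T in Set.Ioi T0, (‖∫ u in x..X, q (u + (-T : ℝ) * I)‖ₑ + ‖∫ u in x..X, q (u + (T : ℝ) * I)‖ₑ) :=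
          lintegral_mono fun T => enorm_sub_le
      _ = (∫⁻ T in Set.Ioi T0, ‖∫ u in x..X, q (u + (-T : ℝ) * I)‖ₑ) + ∫⁻ T in Set.Ioi T0, ‖∫ u in x..X, q (u + (T : ℝ) * I)‖ₑ :=
          lintegral_add_left' (aem (fun T => -T) (by fun_prop)) _
      _ ≤ _ := add_le_add b1 b2
      _ < ⊤ := by finiteness
  have := tendsto_zero_of_lintegral lim fin
  rw [← smul_sub, smul_eq_zero] at this
  exact sub_eq_zero.1 (this.resolve_left I_ne_zero)



lemma eLpNorm_ker {ω : ℂ} (hω : ω.re ≠ 0) :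
    eLpNorm (fun y : ℝ => (ω - y * I)⁻¹) 2 volume ^ 2 = ENNReal.ofReal (Real.pi / |ω.re|) := by
  have h1 : ∫⁻ y : ℝ, ENNReal.ofReal (1 + y ^ 2)⁻¹ = ENNReal.ofReal Real.pi := by
    rw [← integral_univ_inv_one_add_sq, ofReal_integral_eq_lintegral_ofReal integrable_inv_one_add_sq]
    exact Filter.Eventually.of_forall fun y => by positivity
  have h2 := lintegral_affine (fun y => ENNReal.ofReal (1 + y ^ 2)⁻¹) (inv_ne_zero hω) (-ω.im / ω.re)
  rw [h1, inv_inv] at h2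
  have h3 : ∀ y : ℝ, (‖(ω - y * I)⁻¹‖₊ : ℝ≥0∞) ^ 2 =
     ENNReal.ofReal (ω.re ^ 2)⁻¹ * ENNReal.ofReal (1 + (ω.re⁻¹ * y + -ω.im / ω.re) ^ 2)⁻¹ := by
    intro y
    rw [← enorm_eq_nnnorm, ← ofReal_norm, ← ENNReal.ofReal_pow (norm_nonneg _), ← ENNReal.ofReal_mul (by positivity)]
    congr 1
    rw [norm_inv, inv_pow, ← normSq_eq_norm_sq, normSq_apply, ← mul_inv]
    congr 1
    simp
    field_simp
    ring
  rw [eLpNorm_two_sq]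
  simp_rw [h3]
  rw [lintegral_const_mul' _ _ ENNReal.ofReal_ne_top, h2, ← ENNReal.ofReal_mul (by positivity), ← ENNReal.ofReal_mul (by positivity)]
  congr 1
  rw [← sq_abs]
  have : |ω.re| ≠ 0 := by simpa using hω
  field_simp

lemma eLpNorm_ker' {ω : ℂ} (hω : ω.re ≠ 0) :
    eLpNorm (fun y : ℝ => (ω - y * I)⁻¹) 2 volume = ENNReal.ofReal (Real.sqrt (Real.pi / |ω.re|)) := by
  have := eLpNorm_ker hω
  rw [← Real.sq_sqrt (by positivity : 0 ≤ Real.pi / |ω.re|), ENNReal.ofReal_pow (by positivity)] at this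
  exact (ENNReal.pow_right_strictMono two_ne_zero).injective this

lemma ker_ne {ω : ℂ} (hω : ω.re ≠ 0) (y : ℝ) : ω - y * I ≠ 0 := by
  intro h
  apply hω
  simpa using congrArg Complex.re h

lemma memLp_ker {ω : ℂ} (hω : ω.re ≠ 0) : MemLp (fun y : ℝ => (ω - y * I)⁻¹) 2 volume := by
  refine ⟨Continuous.aestronglyMeasurable ?_, by rw [eLpNorm_ker' hω]; exact ENNReal.ofReal_lt_top⟩
  exact Continuous.inv₀ (by fun_prop) (ker_ne hω)

lemma poisson_int {ω : ℂ} (hω : 0 < ω.re) :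
    ∫ y : ℝ, (2 * ω.re : ℂ) * ((starRingEnd ℂ ω) + y * I)⁻¹ * (ω - y * I)⁻¹ = 2 * Real.pi := by
  have h3 : ∀ y : ℝ, (2 * ω.re : ℂ) * ((starRingEnd ℂ ω) + y * I)⁻¹ * (ω - y * I)⁻¹ =
     ((2 * ω.re⁻¹ * (1 + (ω.re⁻¹ * (y - ω.im)) ^ 2)⁻¹ : ℝ) : ℂ) := by
    intro y
    have e : ((starRingEnd ℂ ω) + y * I) * (ω - y * I) = ((ω.re ^ 2 + (y - ω.im) ^ 2 : ℝ) : ℂ) := by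
      apply Complex.ext
      · rw [Complex.ofReal_re]; simp; ring
      · rw [Complex.ofReal_im]; simp; ring
    rw [mul_assoc, ← mul_inv, e]
    push_cast
    rw [← Complex.ofReal_ofNat, ← Complex.ofReal_mul]
    norm_cast
    field_simp
  simp_rw [h3]
  rw [integral_complex_ofReal, integral_const_mul, integral_sub_right_eq_self (fun y => (1 + (ω.re⁻¹ * y) ^ 2)⁻¹) ω.im,
    Measure.integral_comp_mul_left (fun y => (1 + y ^ 2)⁻¹), integral_univ_inv_one_add_sq, inv_inv, abs_of_pos hω]
  push_cast
  simp only [smul_eq_mul, ofReal_mul]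
  have : (ω.re : ℂ) ≠ 0 := by exact_mod_cast hω.ne'
  field_simp

lemma cauchy {f : ℂ → ℂ} (hf : DifferentiableOn ℂ f {w : ℂ | 0 < w.re}) {M : ℝ} (hM : H2b f M) {x : ℝ} (hx : 0 < x)
    {ω : ℂ} (hω : 0 < ω.re) :
    ∫ y : ℝ, vline f x y * (ω - y * I)⁻¹ = 2 * Real.pi * f (x + ω) := by
  set w : ℂ := x + ω with hw
  have hwre : w.re = x + ω.re := by simp [hw]
  set k : ℂ → ℂ := fun z => (2 * ω.re : ℂ) * (z - x + starRingEnd ℂ ω)⁻¹ with hk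
  set h : ℂ → ℂ := fun z => f z - f w * k z with hh
  set s : ℝ := max 0 (x - ω.re) with hs
  have hsx : s < x := max_lt hx (by linarith)
  have kw : k w = 1 := by
    have : w - x + starRingEnd ℂ ω = (2 * ω.re : ℂ) := by
      rw [hw, add_sub_cancel_left, Complex.add_conj]
      push_cast
      rfl
    simp only [hk]
    rw [this, mul_inv_cancel₀]
    have : (ω.re : ℂ) ≠ 0 := by exact_mod_cast hω.ne'
    simpa using this
  have hhw : h w = 0 := by simp [hh, kw]
  have kd : DifferentiableOn ℂ k {z : ℂ | s < z.re} := by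
    intro z hz
    have : z - x + starRingEnd ℂ ω ≠ 0 := by
      intro h0
      have := congrArg Complex.re h0
      simp at this
      have h2 : x - ω.re < z.re := (le_max_right _ _).trans_lt hz
      linarith
    refine DifferentiableAt.differentiableWithinAt ?_
    simp only [hk]
    have d1 : DifferentiableAt ℂ (fun z : ℂ => z - x + starRingEnd ℂ ω) z := by fun_prop
    exact (d1.inv this).const_mul _
  have hd : DifferentiableOn ℂ h {z : ℂ | s < z.re} := by
    refine (hf.mono fun z hz => ?_).sub (kd.const_mul _)
    have hz' : max 0 (x - ω.re) < z.re := hz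
    exact (le_max_left _ _).trans_lt hz'
  have hopen : IsOpen {z : ℂ | s < z.re} := isOpen_lt continuous_const Complex.continuous_re
  have qd : DifferentiableOn ℂ (dslope h w) {z : ℂ | s < z.re} := by
    refine (differentiableOn_dslope (hopen.mem_nhds ?_)).2 hd
    show s < w.re
    rw [hwre]; linarith
  have qe : ∀ z, z ≠ w → dslope h w z = h z * (z - w)⁻¹ := by
    intro z hz
    rw [dslope_of_ne _ hz, slope_def_field, hhw, sub_zero, div_eq_mul_inv]
  set c0 : ℝ := M + ‖f w‖ * (2 * ω.re * Real.sqrt (Real.pi / ω.re)) with hc0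
  have hline : ∀ U : ℝ, x ≤ U → MemLp (vline h U) 2 volume ∧ eLpNorm (vline h U) 2 volume ≤ ENNReal.ofReal c0 := by
    intro U hU
    have hU0 : 0 < U := hx.trans_le hU
    have m1 := hM.memLp hf.continuousOn hU0
    have hre : (-(U - x + starRingEnd ℂ ω) : ℂ).re ≠ 0 := by
      simp
      linarith
    have hre2 : ω.re ≤ |(-(U - x + starRingEnd ℂ ω) : ℂ).re| := by
      rw [Complex.neg_re, abs_neg]
      refine le_trans ?_ (le_abs_self _)
      simp
      linarith
    have m2 := memLp_ker hre
    have e : vline h U = vline f U + (f w * (2 * ω.re)) • (fun y : ℝ => (-(U - x + starRingEnd ℂ ω) - y * I : ℂ)⁻¹) := by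
      ext y
      simp only [vline, hh, hk, Pi.add_apply, Pi.smul_apply, smul_eq_mul]
      rw [show (-(U - x + starRingEnd ℂ ω) - y * I : ℂ) = -(U + y * I - x + starRingEnd ℂ ω) by ring, inv_neg]
      ring
    have n2 : eLpNorm (fun y : ℝ => (-(U - x + starRingEnd ℂ ω) - y * I : ℂ)⁻¹) 2 volume ≤ ENNReal.ofReal (Real.sqrt (Real.pi / ω.re)) := by
      rw [eLpNorm_ker' hre]
      gcongr
    constructor
    · rw [e]
      exact m1.add (m2.const_smul _)
    · rw [e]
      refine (eLpNorm_add_le m1.1 (m2.const_smul _).1 (by norm_num)).trans ?_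
      rw [hc0, ENNReal.ofReal_add hM.1 (by positivity)]
      refine add_le_add (hM.2 U hU0) ?_
      refine (eLpNorm_const_smul_le).trans ?_
      rw [← mul_assoc ‖f w‖, ENNReal.ofReal_mul (by positivity)]
      refine mul_le_mul' ?_ n2
      rw [← ofReal_norm]
      refine ENNReal.ofReal_le_ofReal ?_
      rw [norm_mul]
      simp [abs_of_pos hω]
  have qline : ∀ U : ℝ, U ≠ w.re → vline (dslope h w) U = fun y => -(vline h U y * ((w - U) - y * I)⁻¹) := by
    intro U hU
    ext y
    rw [vline, qe]
    · rw [vline, ← mul_neg, ← inv_neg]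
      congr 2
      ring
    · intro h0
      apply hU
      simpa using congrArg Complex.re h0
  have qint : ∀ U : ℝ, x ≤ U → U ≠ w.re → Integrable (vline (dslope h w) U) := by
    intro U hU hU'
    rw [qline U hU']
    refine (cs_integrable (hline U hU).1 (memLp_ker ?_)).neg
    simpa [sub_eq_zero] using hU'.symm
  have hker1 : ((1 + w.im * I : ℂ)).re ≠ 0 := by simp
  set K : ℝ≥0∞ := 2 * (ENNReal.ofReal c0 * eLpNorm (fun y : ℝ => ((1 + w.im * I) - y * I : ℂ)⁻¹) 2 volume) with hKdef
  have hK : K < ⊤ := by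
    have := (memLp_ker hker1).2
    rw [hKdef]
    exact ENNReal.mul_lt_top (by norm_num) (ENNReal.mul_lt_top ENNReal.ofReal_lt_top this)
  have full : ∀ U : ℝ, x ≤ U → ∫⁻ y, 2 * ‖vline h U y * ((1 + w.im * I) - y * I)⁻¹‖ₑ ≤ K := by
    intro U hU
    rw [lintegral_const_mul' _ _ (by norm_num), hKdef]
    gcongr
    refine (cs (hline U hU).1.1 (memLp_ker hker1).1).trans ?_
    gcongr
    exact (hline U hU).2
  have ptw : ∀ U T : ℝ, |w.im| + 1 < |T| → ‖dslope h w (U + T * I)‖ₑ ≤ 2 * ‖vline h U T * ((1 + w.im * I) - T * I)⁻¹‖ₑ := by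
    intro U T hT
    have h1 : 1 ≤ |w.im - T| := by
      have := abs_sub_abs_le_abs_sub T w.im
      rw [abs_sub_comm] at this
      linarith
    have hne : (U + T * I : ℂ) ≠ w := by
      intro h0
      have := congrArg Complex.im h0
      simp at this
      rw [this] at h1
      simp at h1
      linarith
    have hpos : 0 < ‖(1 + w.im * I) - T * I‖ := norm_pos_iff.2 (ker_ne hker1 T)
    have hpos2 : 0 < ‖U + T * I - w‖ := norm_pos_iff.2 (sub_ne_zero.2 hne)
    have key : ‖(1 + w.im * I) - T * I‖ ≤ 2 * ‖U + T * I - w‖ := by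
      have a1 : ‖(1 + w.im * I) - T * I‖ ≤ 1 + |w.im - T| := by
        rw [show (1 + w.im * I : ℂ) - T * I = 1 + ((w.im - T : ℝ) : ℂ) * I by push_cast; ring]
        refine (norm_add_le _ _).trans ?_
        simp [-ofReal_sub]
      have a2 : |w.im - T| ≤ ‖U + T * I - w‖ := by
        refine le_trans ?_ (Complex.abs_im_le_norm _)
        rw [abs_sub_comm]
        simp
      linarith
    rw [qe _ hne, ← ofReal_norm, ← ofReal_norm, ← ENNReal.ofReal_ofNat, ← ENNReal.ofReal_mul (by norm_num)]
    refine ENNReal.ofReal_le_ofReal ?_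
    rw [norm_mul, norm_mul, norm_inv, norm_inv, vline, mul_left_comm]
    gcongr
    rw [← div_eq_mul_inv, le_div_iff₀ hpos, inv_mul_le_iff₀ hpos2]
    linarith
  have zero : ∀ X : ℝ, w.re < X → ∫ y, vline (dslope h w) x y = ∫ y, vline (dslope h w) X y := by
    intro X hX
    have hxX : x ≤ X := by linarith
    refine contour (T0 := |w.im| + 1) hK hsx hxX qd ?_ ?_ (qint x le_rfl (by linarith)) (qint X hxX hX.ne')
    · intro u hu
      refine le_trans ?_ (full u hu.1.le)
      refine le_trans (setLIntegral_mono' measurableSet_Ioi (fun T hT => ptw u T ?_)) (setLIntegral_le_lintegral _ _)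
      exact lt_of_lt_of_le hT (le_abs_self _)
    · intro u hu
      have := lintegral_affine (fun y => 2 * ‖vline h u y * ((1 + w.im * I) - y * I)⁻¹‖ₑ) (a := -1) (by norm_num) 0
      simp only [inv_neg, inv_one, abs_neg, abs_one, ENNReal.ofReal_one, one_mul] at this
      refine le_trans ?_ (this.le.trans (full u hu.1.le))
      refine le_trans (setLIntegral_mono' measurableSet_Ioi (fun T hT => ?_)) (setLIntegral_le_lintegral _ _)
      have e : -1 * T + 0 = -T := by ring
      rw [e]
      refine ptw u (-T) ?_
      rw [abs_neg]
      exact lt_of_lt_of_le hT (le_abs_self _)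
  have bound : ∀ X : ℝ, w.re < X → ‖∫ y, vline (dslope h w) x y‖ ≤ c0 * Real.sqrt (Real.pi / (X - w.re)) := by
    intro X hX
    have hre : (w - X : ℂ).re ≠ 0 := by simp; linarith
    have hc : 0 ≤ c0 := by have := hM.1; positivity
    rw [zero X hX, qline X hX.ne', integral_neg, norm_neg]
    refine (cs_integral (hline X (by linarith)).1 (memLp_ker hre)).trans ?_
    rw [eLpNorm_ker' hre, ENNReal.toReal_ofReal (by positivity)]
    have e : |(w - X : ℂ).re| = X - w.re := by
      rw [Complex.sub_re, Complex.ofReal_re, abs_sub_comm, abs_of_pos (by linarith)]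
    rw [e]
    gcongr
    exact ENNReal.toReal_le_of_le_ofReal hc (hline X (by linarith)).2
  have int0 : ∫ y, vline (dslope h w) x y = 0 := by
    have lim : Filter.Tendsto (fun X : ℝ => c0 * Real.sqrt (Real.pi / (X - w.re))) Filter.atTop (nhds (c0 * Real.sqrt 0)) := by
      refine Filter.Tendsto.const_mul _ (Filter.Tendsto.sqrt ?_)
      exact Filter.Tendsto.const_div_atTop (Filter.tendsto_atTop_add_const_right _ _ Filter.tendsto_id) _
    have := ge_of_tendsto lim ((Filter.eventually_gt_atTop w.re).mono bound)
    simpa using this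
  rw [qline x (by linarith), integral_neg, neg_eq_zero] at int0
  have hωx : ∀ y : ℝ, (w - x - y * I) = ω - y * I := by intro y; rw [hw]; ring
  simp_rw [hωx] at int0
  have e : ∀ y : ℝ, vline h x y * (ω - y * I)⁻¹ = vline f x y * (ω - y * I)⁻¹ -
      f w * ((2 * ω.re : ℂ) * ((starRingEnd ℂ ω) + y * I)⁻¹ * (ω - y * I)⁻¹) := by
    intro y
    simp only [vline, hh, hk]
    rw [show (x + y * I - x + starRingEnd ℂ ω : ℂ) = (starRingEnd ℂ ω) + y * I by ring]
    ring
  simp_rw [e] at int0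
  rw [integral_sub, integral_const_mul, poisson_int hω] at int0
  · linear_combination int0
  · exact cs_integrable (hM.memLp hf.continuousOn hx) (memLp_ker hω.ne')
  · refine Integrable.const_mul ?_ _
    have := memLp_ker (ω := -(starRingEnd ℂ ω)) (by simpa using hω.ne')
    have := (cs_integrable this (memLp_ker hω.ne')).const_mul (-(2 * ω.re : ℂ))
    refine this.congr (Filter.Eventually.of_forall fun y => ?_)
    simp only
    rw [show (-(starRingEnd ℂ ω) - y * I : ℂ) = -((starRingEnd ℂ ω) + y * I) by ring, inv_neg]
    ring



lemma riesz_ext {H ι : Type*} [NormedAddCommGroup H] [InnerProductSpace ℂ H] [CompleteSpace H]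
    (e : ι → H) (v : ι → ℂ) {C : ℝ} (hC : 0 ≤ C)
    (hb : ∀ c : ι →₀ ℂ, ‖Finsupp.linearCombination ℂ v c‖ ≤ C * ‖Finsupp.linearCombination ℂ e c‖) :
    ∃ F : H, ‖F‖ ≤ C ∧ (∀ i, inner ℂ F (e i) = v i) ∧
      ∀ ε : ℝ, 0 < ε → ∃ c : ι →₀ ℂ, ‖F - Finsupp.linearCombination ℂ e c‖ < ε := by
  set T := Finsupp.linearCombination ℂ e with hT
  have hker : LinearMap.ker T ≤ LinearMap.ker (Finsupp.linearCombination ℂ v) := by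
    intro c hc
    rw [LinearMap.mem_ker] at hc ⊢
    have := hb c
    rw [hc, norm_zero, mul_zero] at this
    exact norm_le_zero_iff.1 this
  let l0 : LinearMap.range T →ₗ[ℂ] ℂ :=
    ((LinearMap.ker T).liftQ (Finsupp.linearCombination ℂ v) hker).comp T.quotKerEquivRange.symm.toLinearMap
  have l0e : ∀ c : ι →₀ ℂ, l0 ⟨T c, LinearMap.mem_range_self T c⟩ = Finsupp.linearCombination ℂ v c := by
    intro c
    have : T.quotKerEquivRange.symm ⟨T c, LinearMap.mem_range_self T c⟩ = (LinearMap.ker T).mkQ c := by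
      rw [LinearEquiv.symm_apply_eq]
      rfl
    simp only [l0, LinearMap.comp_apply, LinearEquiv.coe_coe]
    rw [this]
    simp
  have l0b : ∀ z, ‖l0 z‖ ≤ C * ‖z‖ := by
    rintro ⟨z, c, rfl⟩
    rw [l0e]
    exact hb c
  obtain ⟨g, hg, hgn⟩ := exists_extension_norm_eq (LinearMap.range T) (l0.mkContinuous C l0b)
  set F0 := (InnerProductSpace.toDual ℂ H).symm g with hF0
  have hF0n : ‖F0‖ ≤ C := by
    rw [hF0, LinearIsometryEquiv.norm_map, hgn]
    exact LinearMap.mkContinuous_norm_le _ hC _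
  set K := (LinearMap.range T).topologicalClosure with hK
  have : CompleteSpace K := (LinearMap.range T).isClosed_topologicalClosure.completeSpace_coe
  have hmem : ∀ c, T c ∈ K := fun c => (LinearMap.range T).le_topologicalClosure (LinearMap.mem_range_self T c)
  refine ⟨K.starProjection F0, (K.norm_starProjection_apply_le F0).trans hF0n, fun i => ?_, fun ε hε => ?_⟩
  · have h1 : T (Finsupp.single i 1) = e i := by simp [hT]
    rw [← h1, Submodule.inner_starProjection_left_eq_right, Submodule.starProjection_eq_self_iff.2 (hmem _), hF0, InnerProductSpace.toDual_symm_apply]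
    have h2 := hg ⟨T (Finsupp.single i 1), LinearMap.mem_range_self T _⟩
    rw [h2]
    simp only [LinearMap.mkContinuous_apply]
    rw [l0e]
    simp
  · have h1 : K.starProjection F0 ∈ closure (LinearMap.range T : Set H) := by
      rw [← Submodule.topologicalClosure_coe]
      exact Submodule.starProjection_apply_mem K F0
    obtain ⟨b, ⟨c, rfl⟩, hc⟩ := Metric.mem_closure_iff.1 h1 ε hε
    exact ⟨c, by rwa [dist_eq_norm] at hc⟩

/-- points of the half plane -/
abbrev HP := {μ : ℂ // 0 < μ.re}

/-- exponential sums -/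
noncomputable def esum (c : HP →₀ ℂ) (t : ℝ) : ℂ := c.sum fun i a => a * cexp (-(i : ℂ) * t)

lemma memLp_esum (c : HP →₀ ℂ) : MemLp (esum c) 2 hmeas := by
  unfold esum Finsupp.sum
  exact memLp_finsetSum _ fun i _ => (memLp_exp i.2).const_mul _

lemma integrable_exp_mul {F : ℝ → ℂ} (hF : MemLp F 2 hmeas) {w : ℂ} (hw : 0 < w.re) :
    Integrable (fun t : ℝ => cexp (-w * t) * F t) hmeas := cs_integrable (memLp_exp hw) hF

lemma lap_esum (c : HP →₀ ℂ) {w : ℂ} (hw : 0 < w.re) : lap (esum c) w = c.sum fun i a => a * (w + i)⁻¹ := by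
  unfold lap esum Finsupp.sum
  simp_rw [Finset.mul_sum]
  rw [integral_finsetSum]
  · refine Finset.sum_congr rfl fun i _ => ?_
    rw [← lap_exp (μ := i) (w := w) (by simpa using add_pos hw i.2), lap, ← integral_const_mul]
    refine integral_congr_ae (Filter.Eventually.of_forall fun t => ?_)
    simp only
    ring
  · intro i _
    exact integrable_exp_mul ((memLp_exp i.2).const_mul _) hw

lemma lap_sub {F G : ℝ → ℂ} (hF : MemLp F 2 hmeas) (hG : MemLp G 2 hmeas) {w : ℂ} (hw : 0 < w.re) :
    lap (F - G) w = lap F w - lap G w := by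
  unfold lap
  rw [← integral_sub (integrable_exp_mul hF hw) (integrable_exp_mul hG hw)]
  simp [mul_sub]

lemma PW {f : ℂ → ℂ} (hf : DifferentiableOn ℂ f {w : ℂ | 0 < w.re}) {M : ℝ} (hM : H2b f M) :
    ∃ F : ℝ → ℂ, MemLp F 2 hmeas ∧ (eLpNorm F 2 hmeas).toReal ≤ M ∧ (∀ w : ℂ, 0 < w.re → f w = lap F w) ∧
      ∀ ε : ℝ, 0 < ε → ∃ c : HP →₀ ℂ, (eLpNorm (F - esum c) 2 hmeas).toReal < ε := by
  have conjmem : ∀ i : HP, 0 < (starRingEnd ℂ (i : ℂ)).re := fun i => by simpa using i.2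
  let e : HP → Lp ℂ 2 hmeas := fun i => (memLp_exp i.2).toLp _
  let v : HP → ℂ := fun i => starRingEnd ℂ (f (starRingEnd ℂ (i : ℂ)))
  have hTe : ∀ c : HP →₀ ℂ, Finsupp.linearCombination ℂ e c =ᵐ[hmeas] esum c := by
    intro c
    induction c using Finsupp.induction_linear with
    | zero =>
      rw [map_zero]
      filter_upwards [Lp.coeFn_zero ℂ 2 hmeas] with t ht
      rw [ht]
      simp [esum]
    | add c d hc hd =>
      rw [map_add]
      filter_upwards [hc, hd, Lp.coeFn_add (Finsupp.linearCombination ℂ e c) (Finsupp.linearCombination ℂ e d)] with t h1 h2 h3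
      rw [h3, Pi.add_apply, h1, h2]
      simp only [esum]
      rw [Finsupp.sum_add_index']
      · simp
      · intros; ring
    | single i a =>
      rw [Finsupp.linearCombination_single]
      filter_upwards [Lp.coeFn_smul a (e i), (memLp_exp i.2).coeFn_toLp] with t h1 h2
      rw [h1, Pi.smul_apply]
      simp only [e]
      rw [h2]
      simp [esum]
  have hTn : ∀ c : HP →₀ ℂ, ‖Finsupp.linearCombination ℂ e c‖ = (eLpNorm (esum c) 2 hmeas).toReal := by
    intro c
    rw [Lp.norm_def, eLpNorm_congr_ae (hTe c)]
  set C : ℝ := (2 * Real.pi)⁻¹ * (M * Real.sqrt (2 * Real.pi)) with hC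
  have hM0 := hM.1
  have hC0 : 0 ≤ C := by positivity
  have hb : ∀ c : HP →₀ ℂ, ‖Finsupp.linearCombination ℂ v c‖ ≤ C * ‖Finsupp.linearCombination ℂ e c‖ := by
    intro c
    rw [hTn]
    have step : ∀ x : ℝ, 0 < x → ‖c.sum fun i a => a * starRingEnd ℂ (f (x + x + starRingEnd ℂ (i : ℂ)))‖ ≤ C * (eLpNorm (esum c) 2 hmeas).toReal := by
      intro x hx
      have m1 := hM.memLp hf.continuousOn hx
      have lb := lap_H2b (memLp_esum c)
      have m2' : Continuous (vline (lap (esum c)) x) := by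
        have : vline (lap (esum c)) x = fun y : ℝ => ∑ i ∈ c.support, c i * ((-(x + i) : ℂ) - y * I)⁻¹ * (-1) := by
          ext y
          rw [vline, lap_esum c (by simpa using hx), Finsupp.sum]
          refine Finset.sum_congr rfl fun i _ => ?_
          rw [show (-(x + i) : ℂ) - y * I = -(x + y * I + i) by ring, inv_neg]
          ring
        rw [this]
        refine continuous_finsetSum _ fun i _ => ?_
        refine Continuous.mul (continuous_const.mul (Continuous.inv₀ (by fun_prop) (ker_ne ?_))) continuous_const
        have := i.2
        simp
        linarith
      have m2 : MemLp (vline (lap (esum c)) x) 2 volume :=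
        ⟨m2'.aestronglyMeasurable, (lb.2 x hx).trans_lt ENNReal.ofReal_lt_top⟩
      have id1 : (starRingEnd ℂ) (c.sum fun i a => a * starRingEnd ℂ (f (x + x + starRingEnd ℂ (i : ℂ)))) =
          (2 * Real.pi : ℂ)⁻¹ * ∫ y : ℝ, vline f x y * starRingEnd ℂ (vline (lap (esum c)) x y) := by
        have h1 : ∀ y : ℝ, vline f x y * starRingEnd ℂ (vline (lap (esum c)) x y) =
           ∑ i ∈ c.support, starRingEnd ℂ (c i) * (vline f x y * ((x + starRingEnd ℂ (i:ℂ)) - y * I)⁻¹) := by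
          intro y
          rw [vline, vline, lap_esum c (by simpa using hx), Finsupp.sum, map_sum, Finset.mul_sum]
          refine Finset.sum_congr rfl fun i _ => ?_
          simp only [map_mul, map_inv₀, map_add, conj_ofReal, conj_I]
          rw [show (x + y * -I + starRingEnd ℂ (i:ℂ) : ℂ) = (x + starRingEnd ℂ (i:ℂ)) - y * I by ring]
          ring
        have hre : ∀ i : HP, 0 < (x + starRingEnd ℂ (i:ℂ)).re := by
          intro i
          have := i.2
          simp
          linarith
        simp_rw [h1]
        rw [integral_finsetSum, Finset.mul_sum, Finsupp.sum, map_sum]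
        · refine Finset.sum_congr rfl fun i _ => ?_
          rw [integral_const_mul, cauchy hf hM hx (hre i)]
          simp only [map_mul, conj_conj]
          have : (Real.pi : ℂ) ≠ 0 := by exact_mod_cast Real.pi_ne_zero
          rw [add_assoc]
          field_simp
        · intro i _
          exact (cs_integrable m1 (memLp_ker (hre i).ne')).const_mul _
      have m3 : MemLp (fun y => starRingEnd ℂ (vline (lap (esum c)) x y)) 2 volume := by
        exact m2.star
      have n3 : eLpNorm (fun y => starRingEnd ℂ (vline (lap (esum c)) x y)) 2 volume = eLpNorm (vline (lap (esum c)) x) 2 volume :=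
        eLpNorm_congr_norm_ae (Filter.Eventually.of_forall fun y => by simp)
      rw [← RCLike.norm_conj, id1, norm_mul]
      rw [hC, mul_assoc, mul_assoc]
      have : ‖(2 * Real.pi : ℂ)⁻¹‖ = (2 * Real.pi)⁻¹ := by
        rw [norm_inv, norm_mul]
        simp [abs_of_pos Real.pi_pos]
      rw [this]
      refine mul_le_mul_of_nonneg_left ?_ (by positivity)
      refine (cs_integral m1 m3).trans ?_
      rw [n3]
      refine mul_le_mul (ENNReal.toReal_le_of_le_ofReal hM.1 (hM.2 x hx)) (ENNReal.toReal_le_of_le_ofReal lb.1 (lb.2 x hx)) ENNReal.toReal_nonneg hM.1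
    have lim : Filter.Tendsto (fun x : ℝ => ‖c.sum fun i a => a * starRingEnd ℂ (f (x + x + starRingEnd ℂ (i : ℂ)))‖)
       (nhdsWithin 0 (Set.Ioi 0)) (nhds ‖Finsupp.linearCombination ℂ v c‖) := by
      refine Filter.Tendsto.norm ?_
      rw [Finsupp.linearCombination_apply]
      unfold Finsupp.sum
      refine tendsto_finsetSum _ fun i _ => ?_
      refine Filter.Tendsto.const_mul _ ?_
      refine ((Complex.continuous_conj.tendsto _).comp ?_)
      have fc : ContinuousAt f (starRingEnd ℂ (i : ℂ)) :=
        hf.continuousOn.continuousAt ((isOpen_lt continuous_const Complex.continuous_re).mem_nhds (conjmem i))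
      refine fc.tendsto.comp ?_
      refine Filter.Tendsto.mono_left ?_ nhdsWithin_le_nhds
      have : Continuous (fun x : ℝ => (x + x + starRingEnd ℂ (i : ℂ) : ℂ)) := by fun_prop
      have := this.tendsto 0
      simpa using this
    refine le_of_tendsto lim ?_
    filter_upwards [self_mem_nhdsWithin] with x hx using step x hx
  obtain ⟨F, hFn, hFi, hFd⟩ := riesz_ext e v hC0 hb
  refine ⟨F, Lp.memLp F, ?_, fun w hw => ?_, fun ε hε => ?_⟩
  · rw [← Lp.norm_def]
    refine hFn.trans ?_
    rw [hC]
    have h2 : 1 ≤ 2 * Real.pi := by linarith [Real.pi_gt_three]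
    have : Real.sqrt (2 * Real.pi) ≤ 2 * Real.pi := by
      rw [Real.sqrt_le_left (by positivity)]
      nlinarith
    rw [inv_mul_le_iff₀ (by positivity)]
    nlinarith
  · have hw' : 0 < (starRingEnd ℂ w).re := by simpa using hw
    have := hFi ⟨starRingEnd ℂ w, hw'⟩
    have h3 := congrArg (starRingEnd ℂ) this
    simp only [v, conj_conj] at h3
    rw [inner_conj_symm, L2.inner_def] at h3
    rw [← h3, lap]
    refine integral_congr_ae ?_
    filter_upwards [(memLp_exp hw').coeFn_toLp] with t ht
    simp only [e]
    rw [ht]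
    simp only [RCLike.inner_apply, ← Complex.exp_conj, map_mul, map_neg, conj_conj, conj_ofReal]
    ring
  · obtain ⟨c, hc⟩ := hFd ε hε
    refine ⟨c, ?_⟩
    rw [Lp.norm_def] at hc
    convert hc using 2
    refine eLpNorm_congr_ae ?_
    filter_upwards [hTe c, Lp.coeFn_sub F (Finsupp.linearCombination ℂ e c)] with t h1 h2
    rw [h2, Pi.sub_apply, Pi.sub_apply, h1]



lemma H2b.mono_norm {f g : ℂ → ℂ} {M C : ℝ} (hC : 0 ≤ C) (h : H2b f M) (hfg : ∀ w : ℂ, 0 < w.re → ‖g w‖ ≤ C * ‖f w‖) :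
    H2b g (C * M) := by
  refine ⟨mul_nonneg hC h.1, fun x hx => ?_⟩
  rw [ENNReal.ofReal_mul hC]
  refine (eLpNorm_le_mul_eLpNorm_of_ae_le_mul (c := C) (g := vline f x) ?_ 2).trans ?_
  · exact Filter.Eventually.of_forall fun y => hfg _ (by simpa using hx)
  · gcongr
    exact h.2 x hx

lemma H2b.mono {f : ℂ → ℂ} {M M' : ℝ} (h : H2b f M) (hM : M ≤ M') : H2b f M' :=
  ⟨h.1.trans hM, fun x hx => (h.2 x hx).trans (ENNReal.ofReal_le_ofReal hM)⟩

lemma H2b.congr {f g : ℂ → ℂ} {M : ℝ} (h : H2b f M) (hfg : ∀ w : ℂ, 0 < w.re → g w = f w) : H2b g M := by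
  have := h.mono_norm (g := g) zero_le_one (fun w hw => by rw [hfg w hw, one_mul])
  simpa using this

/-- reproducing kernels -/
noncomputable def kf (μ : ℂ) : ℂ → ℂ := fun w => (w + μ)⁻¹

lemma add_ne {μ w : ℂ} (hμ : 0 < μ.re) (hw : 0 < w.re) : w + μ ≠ 0 := by
  intro h
  have := congrArg Complex.re h
  simp at this
  linarith

lemma kf_memH2 {μ : ℂ} (hμ : 0 < μ.re) : MemH2 (kf μ) := by
  refine memH2_iff.2 ⟨fun w hw => ?_, _, (lap_H2b (memLp_exp hμ)).congr fun w hw => (lap_exp ?_).symm⟩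
  · refine DifferentiableAt.differentiableWithinAt ?_
    have d : DifferentiableAt ℂ (fun w : ℂ => w + μ) w := by fun_prop
    exact d.inv (add_ne hμ hw)
  · simpa using add_pos hw hμ

/-- closure of a subspace in the Hardy norm -/
def Acl (V : Submodule ℂ (ℂ → ℂ)) : Submodule ℂ (ℂ → ℂ) where
  carrier := {g | MemH2 g ∧ ∀ ε : ℝ, 0 < ε → ∃ h ∈ V, MemH2 h ∧ H2b (g - h) ε}
  add_mem' := by
    rintro g g' ⟨hg, h1⟩ ⟨hg', h2⟩
    refine ⟨hg.add hg', fun ε hε => ?_⟩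
    obtain ⟨h, hV, hm, hb⟩ := h1 (ε / 2) (by linarith)
    obtain ⟨h', hV', hm', hb'⟩ := h2 (ε / 2) (by linarith)
    refine ⟨h + h', V.add_mem hV hV', hm.add hm', ?_⟩
    have := hb.add hb' (hg.sub hm).1.continuousOn (hg'.sub hm').1.continuousOn
    rw [add_halves] at this
    convert this using 1
    abel
  zero_mem' := ⟨MemH2.zero, fun ε hε => ⟨0, V.zero_mem, MemH2.zero, by
    have : H2b (0 : ℂ → ℂ) 0 := by
      refine ⟨le_rfl, fun x _ => ?_⟩
      have : vline 0 x = 0 := rfl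
      simp [this]
    simpa using this.mono hε.le⟩⟩
  smul_mem' := by
    rintro c g ⟨hg, h1⟩
    refine ⟨hg.smul c, fun ε hε => ?_⟩
    obtain ⟨h, hV, hm, hb⟩ := h1 (ε / (‖c‖ + 1)) (by positivity)
    refine ⟨c • h, V.smul_mem c hV, hm.smul c, ?_⟩
    have := (hb.smul c).mono (M' := ε) ?_
    · rwa [smul_sub] at this
    · rw [mul_div_assoc', div_le_iff₀ (by positivity)]
      nlinarith [norm_nonneg c]

lemma dense_of_kf {V : Submodule ℂ (ℂ → ℂ)} (h : ∀ μ : ℂ, 0 < μ.re → kf μ ∈ Acl V) {g : ℂ → ℂ} (hg : MemH2 g) :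
    g ∈ Acl V := by
  refine ⟨hg, fun ε hε => ?_⟩
  obtain ⟨hd, M, hM⟩ := memH2_iff.1 hg
  obtain ⟨F, hF, -, hFl, hFd⟩ := PW hd hM
  obtain ⟨c, hc⟩ := hFd (ε / 2 / Real.sqrt (2 * Real.pi)) (by positivity)
  set K : ℂ → ℂ := ∑ i ∈ c.support, c i • kf i with hK
  have hKm : K ∈ Acl V := Submodule.sum_mem _ fun i _ => Submodule.smul_mem _ _ (h i i.2)
  have h1 : H2b (g - K) (ε / 2) := by
    refine ((lap_H2b (hF.sub (memLp_esum c))).congr fun w hw => ?_).mono ?_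
    · rw [lap_sub hF (memLp_esum c) hw, lap_esum c hw, Pi.sub_apply, hFl w hw, hK, Finset.sum_apply]
      rfl
    · rw [lt_div_iff₀ (by positivity)] at hc
      linarith
  obtain ⟨h, hV, hm, hb⟩ := hKm.2 (ε / 2) (by linarith)
  refine ⟨h, hV, hm, ?_⟩
  have := h1.add hb (hg.sub hKm.1).1.continuousOn (hKm.1.sub hm).1.continuousOn
  rw [add_halves] at this
  convert this using 1
  abel

/-- Blaschke factor constant -/
noncomputable def bgam (μ l : ℂ) : ℂ := -(l - μ) / (μ + starRingEnd ℂ l)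

/-- Blaschke factor -/
noncomputable def bfac (μ l w : ℂ) : ℂ := bgam μ l * ((w - starRingEnd ℂ l) / (w + l))

lemma conj_ne {μ l : ℂ} (hμ : 0 < μ.re) (hl : 0 < l.re) : μ + starRingEnd ℂ l ≠ 0 :=
  add_ne (by simpa using hl) hμ

lemma bfac_mul {μ l ν w : ℂ} (hl : 0 < l.re) (hν : 0 < ν.re) (hw : 0 < w.re) (hne : l ≠ ν) :
    (w + ν)⁻¹ * bfac μ l w = bgam μ l * (1 - (l + starRingEnd ℂ l) / (l - ν)) * (w + ν)⁻¹
      + bgam μ l * ((l + starRingEnd ℂ l) / (l - ν)) * (w + l)⁻¹ := by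
  have h1 := add_ne hl hw
  have h2 := add_ne hν hw
  have h3 : l - ν ≠ 0 := sub_ne_zero.2 hne
  unfold bfac
  field_simp
  ring

lemma bgam_mul {μ l : ℂ} (hl : 0 < l.re) (hμ : 0 < μ.re) (hne : l ≠ μ) :
    bgam μ l * (1 - (l + starRingEnd ℂ l) / (l - μ)) = 1 := by
  have h3 : l - μ ≠ 0 := sub_ne_zero.2 hne
  have h4 := conj_ne hμ hl
  unfold bgam
  field_simp
  ring

lemma bfac_le {μ l w : ℂ} (hl : 0 < l.re) (hw : 0 < w.re) : ‖bfac μ l w‖ ≤ ‖bgam μ l‖ := by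
  unfold bfac
  rw [norm_mul]
  refine mul_le_of_le_one_right (norm_nonneg _) ?_
  rw [norm_div, div_le_one (norm_pos_iff.2 (add_ne hl hw))]
  refine le_of_sq_le_sq ?_ (norm_nonneg _)
  rw [← normSq_eq_norm_sq, ← normSq_eq_norm_sq, normSq_apply, normSq_apply]
  simp
  nlinarith [mul_pos hl hw]

lemma bgam_sq {μ l : ℂ} (hl : 0 < l.re) (hμ : 0 < μ.re) :
    ‖bgam μ l‖ ^ 2 = 1 - 4 * l.re * μ.re / ‖μ + starRingEnd ℂ l‖ ^ 2 := by
  have h4 : ‖μ + starRingEnd ℂ l‖ ^ 2 ≠ 0 := by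
    have := conj_ne hμ hl
    positivity
  unfold bgam
  rw [norm_div, norm_neg, div_pow, eq_sub_iff_add_eq, ← add_div, div_eq_one_iff_eq h4]
  rw [← normSq_eq_norm_sq, ← normSq_eq_norm_sq, normSq_apply, normSq_apply]
  simp
  ring

lemma partial_frac {lam : ℕ → ℂ} (hl : ∀ n, 0 < (lam n).re) (hinj : Function.Injective lam) {μ : ℂ} (hμ : 0 < μ.re)
    (hne : ∀ n, lam n ≠ μ) (N : ℕ) : ∃ c : ℕ → ℂ, ∀ w : ℂ, 0 < w.re →
      (w + μ)⁻¹ * ∏ j ∈ Finset.range N, bfac μ (lam j) w = (w + μ)⁻¹ + ∑ j ∈ Finset.range N, c j * (w + lam j)⁻¹ := by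
  induction N with
  | zero => exact ⟨0, fun w hw => by simp⟩
  | succ N ih =>
    obtain ⟨c, hc⟩ := ih
    set s := lam N + starRingEnd ℂ (lam N) with hs
    set γ := bgam μ (lam N) with hγ
    refine ⟨fun j => if j < N then γ * (1 - s / (lam N - lam j)) * c j else
      γ * (s / (lam N - μ)) + ∑ j ∈ Finset.range N, c j * (γ * (s / (lam N - lam j))), fun w hw => ?_⟩
    rw [Finset.prod_range_succ, ← mul_assoc, hc w hw, Finset.sum_range_succ, add_mul, bfac_mul (hl N) hμ hw (hne N),
      bgam_mul (hl N) hμ (hne N), Finset.sum_mul]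
    have e1 : ∑ j ∈ Finset.range N, c j * (w + lam j)⁻¹ * bfac μ (lam N) w =
       ∑ j ∈ Finset.range N, ((γ * (1 - s / (lam N - lam j)) * c j) * (w + lam j)⁻¹ + c j * (γ * (s / (lam N - lam j))) * (w + lam N)⁻¹) := by
      refine Finset.sum_congr rfl fun j hj => ?_
      have hjN : lam N ≠ lam j := fun h => by
        have := hinj h
        simp at hj
        omega
      rw [mul_assoc, bfac_mul (hl N) (hl j) hw hjN]
      ring
    have e2 : ∑ j ∈ Finset.range N, (if j < N then γ * (1 - s / (lam N - lam j)) * c j else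
      γ * (s / (lam N - μ)) + ∑ j ∈ Finset.range N, c j * (γ * (s / (lam N - lam j)))) * (w + lam j)⁻¹ =
       ∑ j ∈ Finset.range N, (γ * (1 - s / (lam N - lam j)) * c j) * (w + lam j)⁻¹ := by
      refine Finset.sum_congr rfl fun j hj => ?_
      rw [if_pos (by simpa using hj)]
    rw [e1, Finset.sum_add_distrib, ← Finset.sum_mul]
    beta_reduce
    rw [e2, if_neg (lt_irrefl N)]
    ring

lemma kf_mem_closure {lam : ℕ → ℂ} (hl : ∀ n, 0 < (lam n).re) (hinj : Function.Injective lam) {μ : ℂ} (hμ : 0 < μ.re)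
    {c : ℝ} (hc : 0 < c) (hδ : ∀ n : ℕ, c / (n + 1) ≤ 4 * (lam n).re * μ.re / ‖μ + starRingEnd ℂ (lam n)‖ ^ 2) :
    kf μ ∈ Acl (Submodule.span ℂ (Set.range fun n => kf (lam n))) := by
  refine ⟨kf_memH2 hμ, fun ε hε => ?_⟩
  by_cases hne : ∀ n, lam n ≠ μ
  swap
  · push Not at hne
    obtain ⟨n, rfl⟩ := hne
    refine ⟨kf (lam n), Submodule.subset_span ⟨n, rfl⟩, kf_memH2 hμ, ?_⟩
    have : H2b (0 : ℂ → ℂ) 0 := by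
      refine ⟨le_rfl, fun x _ => ?_⟩
      have : vline 0 x = 0 := rfl
      simp [this]
    simpa using this.mono hε.le
  obtain ⟨-, M, hM⟩ := memH2_iff.1 (kf_memH2 hμ)
  set P : ℕ → ℝ := fun N => ∏ j ∈ Finset.range N, ‖bgam μ (lam j)‖ with hP
  have P0 : ∀ N, 0 ≤ P N := fun N => Finset.prod_nonneg fun _ _ => norm_nonneg _
  have Psq : ∀ N, P N ^ 2 ≤ Real.exp (-(c * ∑ j ∈ Finset.range N, (1 / ((j : ℝ) + 1)))) := by
    intro N
    rw [hP, ← Finset.prod_pow, Finset.mul_sum, ← Finset.sum_neg_distrib, Real.exp_sum]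
    refine Finset.prod_le_prod (fun _ _ => by positivity) fun j _ => ?_
    rw [bgam_sq (hl j) hμ]
    have h1 := hδ j
    have h2 := Real.add_one_le_exp (-(c * (1 / ((j : ℝ) + 1))))
    have h3 : c * (1 / ((j : ℝ) + 1)) = c / (j + 1) := by ring
    rw [h3] at h2 ⊢
    linarith
  have Plim : Filter.Tendsto (fun N => P N ^ 2) Filter.atTop (nhds 0) := by
    refine squeeze_zero (fun N => by positivity) Psq ?_
    refine Real.tendsto_exp_atBot.comp (Filter.tendsto_neg_atTop_atBot.comp ?_)
    exact Filter.Tendsto.const_mul_atTop hc Real.tendsto_sum_range_one_div_nat_succ_atTop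
  obtain ⟨N, hN⟩ := (Plim.eventually_lt_const (show (0:ℝ) < (ε / (M + 1)) ^ 2 by have := hM.1; positivity)).exists
  have hPN : P N < ε / (M + 1) := lt_of_pow_lt_pow_left₀ 2 (by have := hM.1; positivity) hN
  obtain ⟨d, hd⟩ := partial_frac hl hinj hμ hne N
  set h : ℂ → ℂ := ∑ j ∈ Finset.range N, (-d j) • kf (lam j) with hh
  refine ⟨h, Submodule.sum_mem _ fun j _ => Submodule.smul_mem _ _ (Submodule.subset_span ⟨j, rfl⟩), ?_, ?_⟩
  · exact Submodule.sum_mem H2sub fun j _ => Submodule.smul_mem _ _ (kf_memH2 (hl j))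
  · refine (hM.mono_norm (P0 N) (g := kf μ - h) fun w hw => ?_).mono ?_
    · have : (kf μ - h) w = (w + μ)⁻¹ * ∏ j ∈ Finset.range N, bfac μ (lam j) w := by
        rw [hd w hw, Pi.sub_apply, hh, Finset.sum_apply]
        simp [kf, Finset.sum_neg_distrib]
      rw [this, norm_mul, mul_comm, norm_prod]
      refine mul_le_mul_of_nonneg_right ?_ (norm_nonneg _)
      exact Finset.prod_le_prod (fun _ _ => norm_nonneg _) fun j _ => bfac_le (hl j) hw
    · have h0 := hM.1
      rw [lt_div_iff₀ (by positivity)] at hPN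
      nlinarith [P0 N]

lemma suff (a : ℝ) (b : ℂ) (φ : ℂ → ℂ) (hφ : ∀ w, φ w = (a : ℂ) * w + b) (ha : 1 ≤ a) (hb : 0 < b.re) :
    ∃ f : ℂ → ℂ, MemH2 f ∧
        ∀ g : ℂ → ℂ, MemH2 g → ∀ ε : ℝ, 0 < ε →
          ∃ h ∈ Submodule.span ℂ (Set.range fun n : ℕ => f ∘ φ^[n]),
            H2normSq (g - h) < ENNReal.ofReal ε ^ 2 := by
  have ha0 : 0 < a := by linarith
  set r : ℝ := a⁻¹ with hr
  have hr0 : 0 < r := by positivity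
  have hr1 : r ≤ 1 := inv_le_one_of_one_le₀ ha
  have har : (a : ℂ) * r = 1 := by
    rw [hr]; push_cast; exact mul_inv_cancel₀ (by exact_mod_cast ha0.ne')
  set m : ℝ := r * b.re / 2 with hm
  have hm0 : 0 < m := by positivity
  let lam : ℕ → ℂ := fun n => Nat.rec (m : ℂ) (fun _ z => (r : ℂ) * (z + b)) n
  have lam0 : lam 0 = m := rfl
  have lamS : ∀ n, lam (n + 1) = r * (lam n + b) := fun n => rfl
  have lamSre : ∀ n, (lam (n + 1)).re = r * ((lam n).re + b.re) := fun n => by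
    rw [lamS, Complex.re_ofReal_mul, Complex.add_re]
  have lamSim : ∀ n, (lam (n + 1)).im = r * ((lam n).im + b.im) := fun n => by
    rw [lamS, Complex.im_ofReal_mul, Complex.add_im]
  have step : ∀ n, (lam n).re < (lam (n + 1)).re := by
    intro n
    induction n with
    | zero =>
      rw [lamSre, lam0, Complex.ofReal_re]
      have : r * b.re = 2 * m := by rw [hm]; ring
      rw [mul_add, this]
      nlinarith
    | succ n ih =>
      rw [lamSre n, lamSre (n + 1)]
      have := mul_lt_mul_of_pos_left ih hr0
      linarith
  have smono : StrictMono fun n => (lam n).re := strictMono_nat_of_lt_succ step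
  have hinj : Function.Injective lam := fun i j h => smono.injective (by simp only [h])
  have hge : ∀ n, m ≤ (lam n).re := fun n => by
    have := smono.monotone (Nat.zero_le n)
    simpa [lam0] using this
  have hl : ∀ n, 0 < (lam n).re := fun n => hm0.trans_le (hge n)
  have him : ∀ n, |(lam n).im| ≤ |b.im| / b.re * (lam n).re := by
    intro n
    induction n with
    | zero => simp [lam0]; positivity
    | succ n ih =>
      rw [lamSim, lamSre, abs_mul, abs_of_pos hr0, mul_left_comm]
      refine mul_le_mul_of_nonneg_left ?_ hr0.le
      refine (abs_add_le _ _).trans ?_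
      rw [mul_add, div_mul_cancel₀ _ hb.ne']
      linarith
  have hup : ∀ n : ℕ, (lam n).re ≤ (m + b.re) * (n + 1) := by
    intro n
    induction n with
    | zero => simp [lam0]; exact hb.le
    | succ n ih =>
      rw [lamSre]
      push_cast
      nlinarith [hl n]
  have hit : ∀ n w, φ^[n] w + m = (a : ℂ) ^ n * (w + lam n) := by
    intro n
    induction n with
    | zero => intro w; simp [lam0]
    | succ n ih =>
      intro w
      rw [Function.iterate_succ_apply, ih, hφ, lamS, pow_succ]
      linear_combination (-(a : ℂ) ^ n * (lam n + b)) * har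
  have hfun : ∀ n : ℕ, kf m ∘ φ^[n] = ((a : ℂ) ^ n)⁻¹ • kf (lam n) := by
    intro n
    ext w
    simp only [kf, Function.comp_apply, Pi.smul_apply, smul_eq_mul]
    rw [hit, mul_inv]
  refine ⟨kf m, kf_memH2 (by simpa using hm0), fun g hg ε hε => ?_⟩
  have hspan : Submodule.span ℂ (Set.range fun n => kf (lam n)) ≤ Submodule.span ℂ (Set.range fun n : ℕ => kf m ∘ φ^[n]) := by
    rw [Submodule.span_le]
    rintro _ ⟨n, rfl⟩
    have : kf (lam n) = ((a : ℂ) ^ n) • (kf m ∘ φ^[n]) := by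
      rw [hfun, smul_smul, mul_inv_cancel₀, one_smul]
      exact pow_ne_zero _ (by exact_mod_cast ha0.ne')
    simp only [this]
    exact Submodule.smul_mem _ _ (Submodule.subset_span ⟨n, rfl⟩)
  have key : ∀ μ : ℂ, 0 < μ.re → kf μ ∈ Acl (Submodule.span ℂ (Set.range fun n => kf (lam n))) := by
    intro μ hμ
    set C1 : ℝ := 1 + |b.im| / b.re with hC1
    set C2 : ℝ := ‖μ‖ / m + C1 with hC2
    have hC2pos : 0 < C2 := by positivity
    refine kf_mem_closure hl hinj hμ (c := 4 * μ.re / (C2 ^ 2 * (m + b.re))) (by positivity) fun n => ?_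
    have n1 : ‖μ + starRingEnd ℂ (lam n)‖ ≤ C2 * (lam n).re := by
      refine (norm_add_le _ _).trans ?_
      rw [RCLike.norm_conj, hC2, add_mul]
      refine add_le_add ?_ ?_
      · rw [div_mul_eq_mul_div, le_div_iff₀ hm0]
        exact mul_le_mul_of_nonneg_left (hge n) (norm_nonneg _)
      · refine (Complex.norm_le_abs_re_add_abs_im _).trans ?_
        rw [abs_of_pos (hl n), hC1, add_mul, one_mul]
        linarith [him n]
    have n0 : 0 < ‖μ + starRingEnd ℂ (lam n)‖ := norm_pos_iff.2 (conj_ne hμ (hl n))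
    have n2 : ‖μ + starRingEnd ℂ (lam n)‖ ^ 2 ≤ C2 ^ 2 * (lam n).re ^ 2 := by
      rw [← mul_pow]
      gcongr
    rw [div_div, div_le_div_iff₀ (by positivity) (by positivity)]
    have n3 := hup n
    have hln := hl n
    calc 4 * μ.re * ‖μ + starRingEnd ℂ (lam n)‖ ^ 2 ≤ 4 * μ.re * (C2 ^ 2 * (lam n).re ^ 2) := by gcongr
      _ = 4 * (lam n).re * μ.re * (C2 ^ 2 * (lam n).re) := by ring
      _ ≤ 4 * (lam n).re * μ.re * (C2 ^ 2 * ((m + b.re) * (n + 1))) := by gcongr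
      _ = _ := by ring
  obtain ⟨h, hV, -, hb'⟩ := (dense_of_kf key hg).2 (ε / 2) (by linarith)
  exact ⟨h, hspan hV, hb'.lt (by linarith)⟩



lemma lap_inj {F : ℝ → ℂ} (hF : MemLp F 2 hmeas) (h0 : ∀ w : ℂ, 0 < w.re → lap F w = 0) :
    F =ᵐ[hmeas] 0 := by
  set G : ℝ → ℂ := (Set.Ioi (0:ℝ)).indicator (fun t => cexp (-(1:ℂ) * t) * F t) with hG
  have m1 : Integrable G := by
    rw [hG, integrable_indicator_iff measurableSet_Ioi]
    exact cs_integrable (memLp_exp (by simp)) hF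
  have le : eLpNorm G 2 volume ≤ eLpNorm F 2 hmeas := by
    rw [hG, eLpNorm_indicator_eq_eLpNorm_restrict measurableSet_Ioi]
    refine eLpNorm_mono_ae ?_
    filter_upwards [ae_restrict_mem measurableSet_Ioi] with t ht
    rw [norm_mul, Complex.norm_exp]
    refine mul_le_of_le_one_left (norm_nonneg _) (Real.exp_le_one_iff.2 ?_)
    simp only [Set.mem_Ioi] at ht
    simp
    positivity
  have m2 : MemLp G 2 volume := ⟨m1.1, le.trans_lt hF.2⟩
  have e : 𝓕 G = 0 := by
    ext y
    have := h0 (1 + (2 * Real.pi * y : ℝ) * I) (by simp)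
    rw [lap, ← integral_indicator measurableSet_Ioi] at this
    rw [Real.fourier_real_eq_integral_exp_smul, Pi.zero_apply, ← this]
    refine integral_congr_ae (Filter.Eventually.of_forall fun t => ?_)
    by_cases ht : t ∈ Set.Ioi (0:ℝ)
    · simp only [hG, Set.indicator_of_mem ht, smul_eq_mul]
      rw [← mul_assoc, ← Complex.exp_add]
      congr 2
      push_cast
      ring
    · simp [hG, Set.indicator_of_notMem ht]
  have h2 := plancherel m1 m2
  rw [e, eLpNorm_zero, eq_comm, hG, eLpNorm_indicator_eq_eLpNorm_restrict measurableSet_Ioi] at h2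
  have aes : AEStronglyMeasurable (fun t : ℝ => cexp (-(1:ℂ) * t) * F t) hmeas :=
    (by fun_prop : Continuous (fun t : ℝ => cexp (-(1:ℂ) * t))).aestronglyMeasurable.mul hF.1
  have h3 := (eLpNorm_eq_zero_iff aes (by norm_num)).1 h2
  filter_upwards [h3] with t ht
  simpa [Complex.exp_ne_zero] using ht

/-- norm of a function on the half line -/
noncomputable def nn (F : ℝ → ℂ) : ℝ := (eLpNorm F 2 hmeas).toReal

lemma lap_nn {F : ℝ → ℂ} (hF : MemLp F 2 hmeas) {M : ℝ} (hM : H2b (lap F) M)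
    (hd : DifferentiableOn ℂ (lap F) {w : ℂ | 0 < w.re}) : nn F ≤ M := by
  obtain ⟨F', h1, h2, h3, -⟩ := PW hd hM
  have : F - F' =ᵐ[hmeas] 0 := by
    refine lap_inj (hF.sub h1) fun w hw => ?_
    rw [lap_sub hF h1 hw, h3 w hw, sub_self]
  have h4 : F =ᵐ[hmeas] F' := by
    filter_upwards [this] with t ht
    exact sub_eq_zero.1 ht
  rw [nn, eLpNorm_congr_ae h4]
  exact h2

/-- the operator on the Laplace side -/
noncomputable def TT (a : ℝ) (b : ℂ) (F : ℝ → ℂ) : ℝ → ℂ := fun t => (a⁻¹ : ℂ) * cexp (-b * (a⁻¹ * t : ℝ)) * F (a⁻¹ * t)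

lemma map_hmeas {c : ℝ} (hc : 0 < c) : Measure.map (c * ·) hmeas = ENNReal.ofReal c⁻¹ • hmeas := by
  have h := ((Homeomorph.mulLeft₀ c hc.ne').measurableEmbedding).restrict_map volume (Set.Ioi 0)
  have e : (Homeomorph.mulLeft₀ c hc.ne' : ℝ → ℝ) = (c * ·) := rfl
  rw [e, Real.map_volume_mul_left hc.ne', Measure.restrict_smul, abs_of_pos (by positivity)] at h
  have h2 : (c * ·) ⁻¹' (Set.Ioi (0:ℝ)) = Set.Ioi 0 := by
    ext t; simp [hc]
  rw [h2] at h
  exact h.symm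

lemma TT_memLp {a : ℝ} (ha : 0 < a) {b : ℂ} (hb : 0 ≤ b.re) {F : ℝ → ℂ} (hF : MemLp F 2 hmeas) :
    MemLp (TT a b F) 2 hmeas := by
  have h1 : MemLp (fun t => F (a⁻¹ * t)) 2 hmeas := by
    have : MemLp F 2 (Measure.map (a⁻¹ * ·) hmeas) := by
      rw [map_hmeas (inv_pos.2 ha)]
      exact hF.smul_measure (by finiteness)
    exact this.comp_of_map (by fun_prop)
  refine (h1.const_mul (a⁻¹ : ℂ)).mono ?_ ?_
  · have : AEStronglyMeasurable (fun t : ℝ => (a⁻¹ : ℂ) * cexp (-b * (a⁻¹ * t : ℝ))) hmeas := by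
      refine Continuous.aestronglyMeasurable ?_
      fun_prop
    exact this.mul h1.1
  · filter_upwards [ae_restrict_mem measurableSet_Ioi] with t ht
    rw [TT, norm_mul, norm_mul, norm_mul, Complex.norm_exp]
    refine mul_le_mul_of_nonneg_right (mul_le_of_le_one_right (norm_nonneg _) (Real.exp_le_one_iff.2 ?_)) (norm_nonneg _)
    simp only [Set.mem_Ioi] at ht
    rw [Complex.re_mul_ofReal, Complex.neg_re, neg_mul, neg_nonpos]
    positivity

lemma integral_scale (g : ℝ → ℂ) {a : ℝ} (ha : 0 < a) :
    ∫ t in Set.Ioi (0:ℝ), (a⁻¹ : ℂ) * g (a⁻¹ * t) = ∫ t in Set.Ioi (0:ℝ), g t := by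
  rw [integral_const_mul, integral_comp_mul_left_Ioi g 0 (inv_pos.2 ha), mul_zero, inv_inv, Complex.real_smul, ← mul_assoc,
    inv_mul_cancel₀ (by exact_mod_cast ha.ne'), one_mul]

lemma lap_TT {a : ℝ} (ha : 0 < a) (b : ℂ) (F : ℝ → ℂ) (w : ℂ) : lap (TT a b F) w = lap F (a * w + b) := by
  rw [lap, lap, ← integral_scale (fun t => cexp (-(a * w + b) * t) * F t) ha]
  refine integral_congr_ae (Filter.Eventually.of_forall fun t => ?_)
  have ha' : (a : ℂ) ≠ 0 := by exact_mod_cast ha.ne'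
  simp only [TT]
  have : cexp (-(a * w + b) * (a⁻¹ * t : ℝ)) = cexp (-w * t) * cexp (-b * (a⁻¹ * t : ℝ)) := by
    rw [← Complex.exp_add]
    congr 1
    push_cast
    field_simp
    ring
  rw [this]
  ring

lemma lap_add {F G : ℝ → ℂ} (hF : MemLp F 2 hmeas) (hG : MemLp G 2 hmeas) {w : ℂ} (hw : 0 < w.re) :
    lap (F + G) w = lap F w + lap G w := by
  rw [lap, lap, lap, ← integral_add]
  · refine integral_congr_ae (Filter.Eventually.of_forall fun t => ?_)
    simp [mul_add]
  · exact cs_integrable (memLp_exp hw) hF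
  · exact cs_integrable (memLp_exp hw) hG

lemma lap_smul (c : ℂ) (F : ℝ → ℂ) (w : ℂ) :
    lap (c • F) w = c * lap F w := by
  rw [lap, lap, ← integral_const_mul]
  refine integral_congr_ae (Filter.Eventually.of_forall fun t => ?_)
  simp
  ring

/-- bounded linear functional -/
def BL (L : (ℝ → ℂ) → ℂ) : Prop :=
  (∀ F G, MemLp F 2 hmeas → MemLp G 2 hmeas → L (F + G) = L F + L G) ∧
  (∀ (c : ℂ) F, MemLp F 2 hmeas → L (c • F) = c * L F) ∧
  ∃ K, 0 ≤ K ∧ ∀ F, MemLp F 2 hmeas → ‖L F‖ ≤ K * nn F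

/-- cyclic on the Laplace side -/
def Cyc (a : ℝ) (b : ℂ) (F : ℝ → ℂ) : Prop :=
  MemLp F 2 hmeas ∧ ∀ G, MemLp G 2 hmeas → ∀ ε : ℝ, 0 < ε →
    ∃ H ∈ Submodule.span ℂ (Set.range fun n : ℕ => (TT a b)^[n] F), MemLp H 2 hmeas ∧ nn (G - H) ≤ ε

lemma TT_iter_memLp {a : ℝ} (ha : 0 < a) {b : ℂ} (hb : 0 ≤ b.re) {F : ℝ → ℂ} (hF : MemLp F 2 hmeas) (n : ℕ) :
    MemLp ((TT a b)^[n] F) 2 hmeas := by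
  induction n with
  | zero => exact hF
  | succ n ih =>
    rw [Function.iterate_succ_apply']
    exact TT_memLp ha hb ih

lemma vanish {a : ℝ} (ha : 0 < a) {b : ℂ} (hb : 0 ≤ b.re) {F : ℝ → ℂ} (hF : Cyc a b F) {L : (ℝ → ℂ) → ℂ} (hL : BL L)
    (h0 : ∀ n, L ((TT a b)^[n] F) = 0) : ∀ G, MemLp G 2 hmeas → L G = 0 := by
  obtain ⟨l1, l2, K, hK, l3⟩ := hL
  intro G hG
  by_contra hne
  have hpos : 0 < ‖L G‖ := norm_pos_iff.2 hne
  obtain ⟨H, hH, hm, hn⟩ := hF.2 G hG (‖L G‖ / (2 * (K + 1))) (by positivity)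
  have h1 : MemLp H 2 hmeas ∧ L H = 0 := by
    clear hm hn
    induction hH using Submodule.span_induction with
    | mem x hx =>
      obtain ⟨n, rfl⟩ := hx
      exact ⟨TT_iter_memLp ha hb hF.1 n, h0 n⟩
    | zero =>
      refine ⟨MemLp.zero, ?_⟩
      have := l2 0 0 MemLp.zero
      simpa using this
    | add x y _ _ hx hy =>
      exact ⟨hx.1.add hy.1, by rw [l1 _ _ hx.1 hy.1, hx.2, hy.2, add_zero]⟩
    | smul c x _ hx =>
      exact ⟨hx.1.const_smul c, by rw [l2 _ _ hx.1, hx.2, mul_zero]⟩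
  have h2 : L G = L (G - H) + L H := by
    rw [← l1 _ _ (hG.sub hm) hm, sub_add_cancel]
  have h3 := l3 _ (hG.sub hm)
  rw [h1.2, add_zero] at h2
  rw [← h2] at h3
  have h4 : K * nn (G - H) ≤ K * (‖L G‖ / (2 * (K + 1))) := by gcongr
  have h5 : K * (‖L G‖ / (2 * (K + 1))) < ‖L G‖ := by
    rw [mul_div_assoc', div_lt_iff₀ (by positivity)]
    nlinarith
  linarith


lemma symm_crit {a : ℝ} (ha : 0 < a) {b : ℂ} (hb : 0 ≤ b.re) {F : ℝ → ℂ} (hF : Cyc a b F)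
    {D : (ℝ → ℂ) → (ℝ → ℂ) → ℂ} (hD1 : ∀ G, MemLp G 2 hmeas → BL (D G)) (hD2 : ∀ G, MemLp G 2 hmeas → BL (fun H => D H G))
    (hD : ∀ G H, D (TT a b G) H = D G (TT a b H)) :
    ∀ G H, MemLp G 2 hmeas → MemLp H 2 hmeas → D G H = D H G := by
  have sub : ∀ {L L' : (ℝ → ℂ) → ℂ}, BL L → BL L' → BL (fun G => L G - L' G) := by
    rintro L L' ⟨l1, l2, K, hK, l3⟩ ⟨l1', l2', K', hK', l3'⟩
    refine ⟨fun F G hF hG => ?_, fun c F hF => ?_, K + K', by positivity, fun F hF => ?_⟩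
    · beta_reduce
      rw [l1 _ _ hF hG, l1' _ _ hF hG]
      ring
    · beta_reduce
      rw [l2 _ _ hF, l2' _ _ hF]
      ring
    · rw [add_mul]
      exact (norm_sub_le _ _).trans (add_le_add (l3 _ hF) (l3' _ hF))
  have it : ∀ n G H, D ((TT a b)^[n] G) H = D G ((TT a b)^[n] H) := by
    intro n
    induction n with
    | zero => intro G H; rfl
    | succ n ih =>
      intro G H
      rw [Function.iterate_succ_apply, ih, hD, Function.iterate_succ_apply']
  have s0 : ∀ n m, D ((TT a b)^[n] F) ((TT a b)^[m] F) = D ((TT a b)^[m] F) ((TT a b)^[n] F) := by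
    intro n m
    rw [it, it, ← Function.iterate_add_apply, ← Function.iterate_add_apply, add_comm]
  have s1 : ∀ n G, MemLp G 2 hmeas → D ((TT a b)^[n] F) G = D G ((TT a b)^[n] F) := by
    intro n G hG
    have hm := TT_iter_memLp ha hb hF.1 n
    exact sub_eq_zero.1 (vanish ha hb hF (sub (hD1 _ hm) (hD2 _ hm)) (fun m => sub_eq_zero.2 (s0 n m)) G hG)
  intro G H hG hH
  exact sub_eq_zero.1 (vanish ha hb hF (sub (hD1 _ hG) (hD2 _ hG)) (fun m => sub_eq_zero.2 (s1 m G hG).symm) H hH)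

lemma lap_diff {F : ℝ → ℂ} (hF : MemLp F 2 hmeas) : DifferentiableOn ℂ (lap F) {w : ℂ | 0 < w.re} := by
  intro w hw
  simp only [Set.mem_ofPred_eq] at hw
  have hr : 0 < w.re / 2 := by linarith
  have hball : ∀ z ∈ Metric.ball w (w.re / 2), w.re / 2 < z.re := by
    intro z hz
    rw [Metric.mem_ball, dist_eq] at hz
    have := (abs_le.1 (abs_re_le_norm (z - w))).1
    simp at this
    linarith
  have key := hasDerivAt_integral_of_dominated_loc_of_deriv_le (𝕜 := ℂ) (μ := hmeas) (F := fun w t => cexp (-w * t) * F t)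
    (F' := fun w t => (-(t:ℂ) * cexp (-w * t)) * F t) (x₀ := w) (s := Metric.ball w (w.re / 2))
    (bound := fun t => ‖(4 / w.re : ℂ) * (cexp (-(w.re / 4 : ℂ) * t) * F t)‖) (Metric.ball_mem_nhds w hr) ?_ ?_ ?_ ?_ ?_ ?_
  · exact key.2.differentiableAt.differentiableWithinAt
  · filter_upwards [Metric.ball_mem_nhds w hr] with z hz
    exact (integrable_exp_mul hF (by linarith [hball z hz])).1
  · exact integrable_exp_mul hF hw
  · exact (by fun_prop : Continuous (fun t : ℝ => (-(t:ℂ) * cexp (-w * t)))).aestronglyMeasurable.mul hF.1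
  · filter_upwards [ae_restrict_mem measurableSet_Ioi] with t ht z hz
    simp only [Set.mem_Ioi] at ht
    have hz' := hball z hz
    rw [norm_mul, norm_mul, norm_mul, norm_mul, ← mul_assoc]
    refine mul_le_mul_of_nonneg_right ?_ (norm_nonneg _)
    rw [Complex.norm_exp, Complex.norm_exp, norm_neg, Complex.norm_real, Real.norm_of_nonneg ht.le]
    have e1 : ‖(4 / w.re : ℂ)‖ = 4 / w.re := by
      rw [norm_div, Complex.norm_real, Real.norm_of_nonneg hw.le]; simp
    have e2 : (-(w.re / 4 : ℂ) * t).re = -(w.re / 4 * t) := by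
      have : (-(w.re / 4 : ℂ) * t) = ((-(w.re / 4 * t) : ℝ) : ℂ) := by push_cast; ring
      rw [this, Complex.ofReal_re]
    have e3 : (-z * t).re ≤ -(w.re / 4 * t) + -(w.re / 4 * t) := by
      rw [Complex.re_mul_ofReal, Complex.neg_re]
      nlinarith
    rw [e1, e2]
    have h1 : Real.exp ((-z * t).re) ≤ Real.exp (-(w.re / 4 * t)) * Real.exp (-(w.re / 4 * t)) := by
      rw [← Real.exp_add]
      exact Real.exp_le_exp.2 e3
    have h2 : t * Real.exp (-(w.re / 4 * t)) ≤ 4 / w.re := by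
      rw [Real.exp_neg, ← div_eq_mul_inv, div_le_iff₀ (Real.exp_pos _)]
      have := Real.add_one_le_exp (w.re / 4 * t)
      calc t = 4 / w.re * (w.re / 4 * t) := by field_simp
        _ ≤ _ := by gcongr; linarith
    calc t * Real.exp ((-z * t).re) ≤ t * (Real.exp (-(w.re / 4 * t)) * Real.exp (-(w.re / 4 * t))) := by gcongr
      _ = (t * Real.exp (-(w.re / 4 * t))) * Real.exp (-(w.re / 4 * t)) := by ring
      _ ≤ _ := by gcongr
  · refine (Integrable.const_mul (integrable_exp_mul hF ?_) _).norm
    have : (w.re / 4 : ℂ) = ((w.re / 4 : ℝ) : ℂ) := by push_cast; ring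
    rw [this, Complex.ofReal_re]
    linarith
  · refine Filter.Eventually.of_forall fun t z hz => ?_
    have h := ((((hasDerivAt_id z).neg.mul_const (t:ℂ))).cexp).mul_const (F t)
    have e : (-(t:ℂ) * cexp (-z * t)) * F t = cexp (-z * t) * (-1 * t) * F t := by ring
    rw [e]
    exact h

lemma transfer {a : ℝ} (ha : 0 < a) {b : ℂ} (hb : 0 ≤ b.re) {φ : ℂ → ℂ} (hφ : ∀ w, φ w = (a : ℂ) * w + b)
    {f : ℂ → ℂ} (hf : MemH2 f) (hc : ∀ g : ℂ → ℂ, MemH2 g → ∀ ε : ℝ, 0 < ε →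
          ∃ h ∈ Submodule.span ℂ (Set.range fun n : ℕ => f ∘ φ^[n]),
            H2normSq (g - h) < ENNReal.ofReal ε ^ 2) : ∃ F, Cyc a b F := by
  obtain ⟨d, M, hM⟩ := memH2_iff.1 hf
  obtain ⟨F, hF, -, hl, -⟩ := PW d hM
  have hit : ∀ n (w : ℂ), 0 < w.re → 0 < (φ^[n] w).re ∧ lap ((TT a b)^[n] F) w = f (φ^[n] w) := by
    intro n
    induction n with
    | zero => exact fun w hw => ⟨hw, (hl w hw).symm⟩
    | succ n ih =>
      intro w hw
      have hp : 0 < (φ w).re := by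
        rw [hφ]
        simp
        positivity
      rw [Function.iterate_succ_apply, Function.iterate_succ_apply', lap_TT ha, ← hφ]
      exact ih _ hp
  refine ⟨F, hF, fun G hG ε hε => ?_⟩
  obtain ⟨h, hh, hlt⟩ := hc (lap G) (memH2_iff.2 ⟨lap_diff hG, _, lap_H2b hG⟩) ε hε
  have : ∃ H ∈ Submodule.span ℂ (Set.range fun n : ℕ => (TT a b)^[n] F), MemLp H 2 hmeas ∧ ∀ w : ℂ, 0 < w.re → lap H w = h w := by
    clear hlt
    induction hh using Submodule.span_induction with
    | mem x hx =>
      obtain ⟨n, rfl⟩ := hx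
      exact ⟨_, Submodule.subset_span ⟨n, rfl⟩, TT_iter_memLp ha hb hF n, fun w hw => (hit n w hw).2⟩
    | zero => exact ⟨0, zero_mem _, MemLp.zero, fun w hw => by simp [lap]⟩
    | add x y _ _ hx hy =>
      obtain ⟨X, x1, x2, x3⟩ := hx
      obtain ⟨Y, y1, y2, y3⟩ := hy
      exact ⟨X + Y, add_mem x1 y1, x2.add y2, fun w hw => by rw [lap_add x2 y2 hw, x3 w hw, y3 w hw]; rfl⟩
    | smul c x _ hx =>
      obtain ⟨X, x1, x2, x3⟩ := hx
      exact ⟨c • X, Submodule.smul_mem _ c x1, x2.const_smul c, fun w hw => by rw [lap_smul, x3 w hw]; rfl⟩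
  obtain ⟨H, h1, h2, h3⟩ := this
  refine ⟨H, h1, h2, lap_nn (hG.sub h2) ?_ (lap_diff (hG.sub h2))⟩
  have hb2 := H2b_of_sq_le hε.le hlt.le
  refine ⟨hε.le, fun x hx => ?_⟩
  have : vline (lap (G - H)) x = vline (lap G - h) x := by
    ext y
    have hw : 0 < ((x:ℂ) + y * I).re := by simpa using hx
    simp only [vline, Pi.sub_apply]
    rw [lap_sub hG h2 hw, h3 _ hw]
  rw [this]
  exact hb2.2 x hx



lemma BL_V {V : (ℝ → ℂ) → (ℝ → ℂ)} (h1 : ∀ F G, V (F + G) = V F + V G) (h2 : ∀ (c : ℂ) F, V (c • F) = c • V F)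
    (h3 : ∀ F, MemLp F 2 hmeas → MemLp (V F) 2 hmeas) (h4 : ∀ F, MemLp F 2 hmeas → nn (V F) ≤ nn F)
    {k : ℝ → ℂ} (hk : MemLp k 2 hmeas) : BL (fun F => ∫ t in Set.Ioi (0:ℝ), k t * V F t) := by
  refine ⟨fun F G hF hG => ?_, fun c F hF => ?_, nn k, ENNReal.toReal_nonneg, fun F hF => ?_⟩
  · beta_reduce
    rw [h1, ← integral_add (cs_integrable hk (h3 _ hF)) (cs_integrable hk (h3 _ hG))]
    simp only [Pi.add_apply, mul_add]
  · beta_reduce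
    rw [h2, ← integral_const_mul]
    congr 1
    ext t
    simp only [Pi.smul_apply, smul_eq_mul]
    ring
  · refine (cs_integral hk (h3 _ hF)).trans ?_
    exact mul_le_mul_of_nonneg_left (h4 _ hF) ENNReal.toReal_nonneg

lemma BL_mul {k : ℝ → ℂ} (hk : MemLp k 2 hmeas) : BL (fun F => ∫ t in Set.Ioi (0:ℝ), k t * F t) :=
  BL_V (V := id) (fun _ _ => rfl) (fun _ _ => rfl) (fun _ h => h) (fun _ _ => le_rfl) hk

lemma BL.const_mul {L : (ℝ → ℂ) → ℂ} (hL : BL L) (c : ℂ) : BL (fun F => c * L F) := by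
  obtain ⟨l1, l2, K, hK, l3⟩ := hL
  refine ⟨fun F G hF hG => ?_, fun d F hF => ?_, ‖c‖ * K, by positivity, fun F hF => ?_⟩
  · beta_reduce
    rw [l1 _ _ hF hG, mul_add]
  · beta_reduce
    rw [l2 _ _ hF]
    ring
  · rw [norm_mul, mul_assoc]
    exact mul_le_mul_of_nonneg_left (l3 _ hF) (norm_nonneg _)

lemma memLp_ind {u v : ℝ} {f : ℝ → ℂ} (hf : ContinuousOn f (Set.Icc u v)) :
    MemLp ((Set.Ioc u v).indicator f) 2 hmeas := by
  rw [memLp_indicator_iff_restrict measurableSet_Ioc]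
  obtain ⟨C, hC⟩ := isCompact_Icc.exists_bound_of_continuousOn hf
  have : IsFiniteMeasure (hmeas.restrict (Set.Ioc u v)) := by
    refine ⟨?_⟩
    rw [Measure.restrict_apply_univ]
    exact (Measure.restrict_apply_le _ _).trans_lt (by simp)
  refine MemLp.of_bound ?_ C ?_
  · have := (hf.mono Set.Ioc_subset_Icc_self).aestronglyMeasurable (μ := hmeas) measurableSet_Ioc
    exact this
  · filter_upwards [ae_restrict_mem measurableSet_Ioc] with t ht
    exact hC t (Set.Ioc_subset_Icc_self ht)

lemma integral_ind {u v : ℝ} (hu : 0 ≤ u) (huv : u ≤ v) (g : ℝ → ℝ) {f : ℝ → ℂ} (h : ∀ t, 0 < t → f t = (Set.Ioc u v).indicator (fun t => (g t : ℂ)) t) :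
    ∫ t in Set.Ioi (0:ℝ), f t = ((∫ t in u..v, g t : ℝ) : ℂ) := by
  rw [setIntegral_congr_fun measurableSet_Ioi (fun t ht => h t ht), setIntegral_indicator measurableSet_Ioc,
    intervalIntegral.integral_of_le huv, ← integral_complex_ofReal]
  congr 2
  refine Set.inter_eq_right.2 fun t ht => lt_of_le_of_lt hu ht.1

lemma case1 {b : ℂ} (hb : b.re = 0) {F : ℝ → ℂ} (hF : Cyc 1 b F) : False := by
  obtain ⟨κ, hκ, he⟩ : ∃ κ : ℝ, 0 < κ ∧ cexp (-b * κ) = 1 := by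
    have hbe : b = b.im * I := by
      apply Complex.ext <;> simp [hb]
    by_cases h : b.im = 0
    · exact ⟨1, one_pos, by rw [hbe, h]; simp⟩
    · refine ⟨2 * Real.pi / |b.im|, by positivity, ?_⟩
      rw [Complex.exp_eq_one_iff]
      have hc : (b.im : ℂ) ≠ 0 := by exact_mod_cast h
      rcases abs_choice b.im with h' | h'
      · refine ⟨-1, ?_⟩
        rw [h', hbe]
        push_cast
        simp
        field_simp
      · refine ⟨1, ?_⟩
        rw [h', hbe]
        push_cast
        simp
        field_simp
  let V : (ℝ → ℂ) → (ℝ → ℂ) := fun H t => H (t + κ)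
  have mp : MeasurePreserving (fun t : ℝ => t + κ) hmeas (volume.restrict (Set.Ioi κ)) := by
    have := (measurePreserving_add_right volume κ).restrict_preimage (measurableSet_Ioi (a := κ))
    simpa using this
  have le : volume.restrict (Set.Ioi κ) ≤ hmeas := Measure.restrict_mono_set _ (Set.Ioi_subset_Ioi hκ.le)
  have Vm : ∀ F, MemLp F 2 hmeas → MemLp (V F) 2 hmeas := fun F hF =>
    (hF.mono_measure le).comp_measurePreserving mp
  have Vn : ∀ F, MemLp F 2 hmeas → nn (V F) ≤ nn F := fun F hF => by
    refine ENNReal.toReal_mono hF.2.ne ?_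
    have := eLpNorm_comp_measurePreserving (p := 2) (hF.mono_measure le).1 mp
    exact this.le.trans (eLpNorm_mono_measure _ le)
  have key := symm_crit one_pos hb.ge hF (D := fun G H => ∫ t in Set.Ioi (0:ℝ), G t * V H t)
    (fun G hG => BL_V (fun _ _ => rfl) (fun _ _ => rfl) Vm Vn hG)
    (fun G hG => by simpa only [mul_comm] using BL_mul (Vm G hG)) (fun G H => by
      congr 1
      ext t
      simp only [TT, V, inv_one, one_mul, Complex.ofReal_one]
      have : cexp (-b * (t + κ : ℝ)) = cexp (-b * t) := by
        rw [Complex.ofReal_add, mul_add, Complex.exp_add, he, mul_one]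
      rw [this]
      ring)
    ((Set.Ioc 0 κ).indicator fun _ => 1) ((Set.Ioc κ (2 * κ)).indicator fun _ => 1)
    (memLp_ind continuousOn_const) (memLp_ind continuousOn_const)
  beta_reduce at key
  rw [integral_ind (u := 0) (v := κ) le_rfl hκ.le (fun _ => 1), integral_ind (u := 0) (v := κ) le_rfl hκ.le (fun _ => 0)] at key
  · simp at key
    exact hκ.ne' key
  · intro t ht
    have : t + κ ∉ Set.Ioc 0 κ := fun h => by linarith [h.2]
    simp [V, Set.indicator_of_notMem this]
  · intro t ht
    by_cases h : t ∈ Set.Ioc 0 κ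
    · have : t + κ ∈ Set.Ioc κ (2 * κ) := ⟨by linarith, by linarith [h.2]⟩
      simp [V, Set.indicator_of_mem this, Set.indicator_of_mem h]
    · simp [V, Set.indicator_of_notMem h]

lemma kappa {a : ℝ} (ha : 0 < a) (ha1 : a ≠ 1) : ∃ κ : ℝ, 0 < κ ∧ ∀ t : ℝ, 0 < t → Real.sin (κ * Real.log (a * t)) = Real.sin (κ * Real.log t) := by
  have hl : Real.log a ≠ 0 := Real.log_ne_zero_of_pos_of_ne_one ha ha1
  refine ⟨2 * Real.pi / |Real.log a|, by positivity, fun t ht => ?_⟩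
  rw [Real.log_mul ha.ne' ht.ne', mul_add]
  rcases abs_choice (Real.log a) with h' | h'
  · rw [h', div_mul_cancel₀ _ hl, add_comm, Real.sin_add_two_pi]
  · rw [h', div_neg, neg_mul, div_mul_cancel₀ _ hl, add_comm, ← sub_eq_add_neg, Real.sin_sub_two_pi]

lemma sin_pos' {κ : ℝ} (hκ : 0 < κ) : 0 < ∫ t in (1:ℝ)..Real.exp (κ⁻¹), Real.sin (κ * Real.log t) * t⁻¹ := by
  have h1 : 1 < Real.exp (κ⁻¹) := Real.one_lt_exp_iff.2 (by positivity)
  refine intervalIntegral.intervalIntegral_pos_of_pos_on ?_ ?_ h1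
  · refine ContinuousOn.intervalIntegrable ?_
    rw [Set.uIcc_of_le h1.le]
    have hne : ∀ t ∈ Set.Icc 1 (Real.exp (κ⁻¹)), t ≠ 0 := fun t ht => by linarith [ht.1]
    fun_prop (disch := assumption)
  · intro t ht
    have h0 : 0 < Real.log t := Real.log_pos ht.1
    have h2 : Real.log t < κ⁻¹ := (Real.log_lt_iff_lt_exp (by linarith [ht.1])).2 ht.2
    have h3 : κ * Real.log t < 1 := by
      have := mul_lt_mul_of_pos_left h2 hκ
      rwa [mul_inv_cancel₀ hκ.ne'] at this
    have : 0 < t := by linarith [ht.1]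
    refine mul_pos (Real.sin_pos_of_pos_of_lt_pi (by positivity) (by linarith [Real.pi_gt_three])) (by positivity)

lemma sin_neg' {κ : ℝ} (hκ : 0 < κ) : ∫ t in Real.exp (-κ⁻¹)..(1:ℝ), Real.sin (κ * Real.log t) * t⁻¹ ≤ 0 := by
  have h1 : Real.exp (-κ⁻¹) < 1 := Real.exp_lt_one_iff.2 (by simpa using hκ)
  have h5 := intervalIntegral.integral_nonneg (f := fun t => -(Real.sin (κ * Real.log t) * t⁻¹)) (μ := volume) h1.le ?_
  · rw [intervalIntegral.integral_neg] at h5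
    linarith
  · intro t ht
    have ht0 : 0 < t := (Real.exp_pos _).trans_le ht.1
    have h0 : Real.log t ≤ 0 := Real.log_nonpos ht0.le ht.2
    have h2 : -κ⁻¹ ≤ Real.log t := (Real.le_log_iff_exp_le ht0).2 ht.1
    have h3 : -1 ≤ κ * Real.log t := by
      have := mul_le_mul_of_nonneg_left h2 hκ.le
      rwa [mul_neg, mul_inv_cancel₀ hκ.ne'] at this
    have h4 : Real.sin (κ * Real.log t) ≤ 0 :=
      Real.sin_nonpos_of_nonpos_of_neg_pi_le (by nlinarith) (by linarith [Real.pi_gt_three])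
    rw [← neg_mul]
    exact mul_nonneg (by linarith) (by positivity)

lemma inv_pos' {u v : ℝ} (hu : 0 < u) (huv : u < v) : 0 < ∫ t in u..v, t⁻¹ := by
  rw [integral_inv_of_pos hu (hu.trans huv)]
  exact Real.log_pos (by rwa [one_lt_div hu])

lemma case3 {a : ℝ} (ha : 0 < a) (ha1 : a < 1) {b : ℂ} (hb : 0 < b.re) {F : ℝ → ℂ} (hF : Cyc a b F) : False := by
  obtain ⟨κ, hκ, hs⟩ := kappa ha ha1.ne
  obtain ⟨p, hp, hpre⟩ : ∃ p : ℂ, p * a + b = p ∧ 0 < p.re := by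
    refine ⟨b / ((1 - a : ℝ) : ℂ), ?_, ?_⟩
    · have : ((1 - a : ℝ) : ℂ) ≠ 0 := by
        exact_mod_cast (by linarith : (1 - a) ≠ 0)
      have h2 : (1 - a : ℂ) ≠ 0 := by simpa using this
      push_cast
      field_simp
      ring
    · rw [Complex.div_ofReal_re]
      exact div_pos hb (by linarith)
  let m : ℝ → ℂ := fun t => (Real.sin (κ * Real.log t) : ℂ)
  have k1 : MemLp (fun t : ℝ => cexp (-p * t)) 2 hmeas := memLp_exp hpre
  have mmeas : Measurable m := by
    refine Complex.measurable_ofReal.comp ?_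
    exact Real.measurable_sin.comp (measurable_const.mul Real.measurable_log)
  have k2 : MemLp (fun t : ℝ => m t * cexp (-p * t)) 2 hmeas := by
    refine k1.mono (mmeas.aestronglyMeasurable.mul k1.1) (Filter.Eventually.of_forall fun t => ?_)
    rw [norm_mul]
    refine mul_le_of_le_one_left (norm_nonneg _) ?_
    rw [Complex.norm_real]
    exact Real.abs_sin_le_one _
  have inv : ∀ (μ : ℝ → ℂ), (∀ t, 0 < t → μ (a * t) = μ t) → ∀ G, ∫ t in Set.Ioi (0:ℝ), (μ t * cexp (-p * t)) * TT a b G t =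
      ∫ t in Set.Ioi (0:ℝ), (μ t * cexp (-p * t)) * G t := by
    intro μ hμ G
    rw [← integral_scale (fun t => (μ t * cexp (-p * t)) * G t) ha]
    refine setIntegral_congr_fun measurableSet_Ioi fun t ht => ?_
    have ht0 : (0:ℝ) < a⁻¹ * t := mul_pos (inv_pos.2 ha) ht
    have h1 := hμ _ ht0
    rw [← mul_assoc, mul_inv_cancel₀ ha.ne', one_mul] at h1
    have h2 : cexp (-p * (a⁻¹ * t : ℝ)) = cexp (-p * t) * cexp (-b * (a⁻¹ * t : ℝ)) := by
      rw [← Complex.exp_add]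
      congr 1
      have ha' : (a : ℂ) ≠ 0 := by exact_mod_cast ha.ne'
      nth_rewrite 1 [← hp]
      push_cast
      field_simp
      ring
    simp only [TT]
    rw [h1, h2]
    ring
  have inv1 := inv (fun _ => 1) (fun _ _ => rfl)
  have inv2 := inv m (fun t ht => by simp only [m]; rw [hs t ht])
  simp only [one_mul] at inv1
  set l1 : (ℝ → ℂ) → ℂ := fun G => ∫ t in Set.Ioi (0:ℝ), cexp (-p * t) * G t with hl1
  set l2 : (ℝ → ℂ) → ℂ := fun G => ∫ t in Set.Ioi (0:ℝ), (m t * cexp (-p * t)) * G t with hl2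
  have hR : 1 < Real.exp κ⁻¹ := Real.one_lt_exp_iff.2 (by positivity)
  have hr : Real.exp (-κ⁻¹) < 1 := Real.exp_lt_one_iff.2 (by simpa using hκ)
  have hr0 := Real.exp_pos (-κ⁻¹)
  set R := Real.exp κ⁻¹ with hRdef
  set r := Real.exp (-κ⁻¹) with hrdef
  have hc : ∀ u v : ℝ, 0 < u → MemLp ((Set.Ioc u v).indicator fun t => cexp (p * t) * (t⁻¹ : ℝ)) 2 hmeas := by
    intro u v hu
    refine memLp_ind ?_
    have hne : ∀ t ∈ Set.Icc u v, t ≠ 0 := fun t ht => by linarith [ht.1]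
    refine ContinuousOn.mul (by fun_prop) ?_
    refine Complex.continuous_ofReal.comp_continuousOn ?_
    fun_prop (disch := assumption)
  have key := symm_crit ha hb.le hF (D := fun G H => l1 G * l2 H)
    (fun G hG => (BL_mul k2).const_mul _) (fun G hG => by simpa only [mul_comm _ (l2 G)] using (BL_mul k1).const_mul (l2 G))
    (fun G H => by
      have e1 : l1 (TT a b G) = l1 G := inv1 G
      have e2 : l2 (TT a b H) = l2 H := inv2 H
      rw [e1, e2])
    _ _ (hc 1 R one_pos) (hc r 1 hr0)
  have ee : ∀ t : ℝ, cexp (-p * t) * cexp (p * t) = 1 := fun t => by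
    rw [← Complex.exp_add]; simp
  have v1 : ∀ u v : ℝ, 0 < u → u ≤ v → l1 ((Set.Ioc u v).indicator fun t => cexp (p * t) * (t⁻¹ : ℝ)) =
      ((∫ t in u..v, t⁻¹ : ℝ) : ℂ) := by
    intro u v hu huv
    refine integral_ind hu.le huv _ fun t ht => ?_
    by_cases h : t ∈ Set.Ioc u v
    · rw [Set.indicator_of_mem h, Set.indicator_of_mem h, ← mul_assoc, ee, one_mul]
    · simp [Set.indicator_of_notMem h]
  have v2 : ∀ u v : ℝ, 0 < u → u ≤ v → l2 ((Set.Ioc u v).indicator fun t => cexp (p * t) * (t⁻¹ : ℝ)) =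
      ((∫ t in u..v, Real.sin (κ * Real.log t) * t⁻¹ : ℝ) : ℂ) := by
    intro u v hu huv
    refine integral_ind hu.le huv _ fun t ht => ?_
    by_cases h : t ∈ Set.Ioc u v
    · rw [Set.indicator_of_mem h, Set.indicator_of_mem h, mul_assoc, ← mul_assoc (cexp _), ee, one_mul, Complex.ofReal_mul]
    · simp [Set.indicator_of_notMem h]
  beta_reduce at key
  rw [v1 _ _ one_pos hR.le, v1 _ _ hr0 hr.le, v2 _ _ one_pos hR.le, v2 _ _ hr0 hr.le] at key
  have key' : (∫ t in (1:ℝ)..R, t⁻¹) * (∫ t in r..1, Real.sin (κ * Real.log t) * t⁻¹) =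
     (∫ t in r..1, t⁻¹) * (∫ t in (1:ℝ)..R, Real.sin (κ * Real.log t) * t⁻¹) := by exact_mod_cast key
  have p1 := mul_pos (inv_pos' hr0 hr) (sin_pos' hκ)
  have p2 := mul_nonneg (inv_pos' one_pos hR).le (neg_nonneg.2 (sin_neg' hκ))
  linarith

lemma inv_lintegral (g : ℝ → ℝ≥0∞) : ∫⁻ t in Set.Ioi (0:ℝ), ENNReal.ofReal ((t ^ 2)⁻¹) * g t⁻¹ = ∫⁻ t in Set.Ioi (0:ℝ), g t := by
  have h := lintegral_image_eq_lintegral_abs_deriv_mul (s := Set.Ioi (0:ℝ)) (f := fun t => t⁻¹) (f' := fun t => -(t ^ 2)⁻¹)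
    measurableSet_Ioi (fun t ht => (hasDerivAt_inv (ne_of_gt ht)).hasDerivWithinAt) inv_injective.injOn g
  have e : (fun t : ℝ => t⁻¹) '' Set.Ioi 0 = Set.Ioi 0 := by
    ext t
    constructor
    · rintro ⟨s, hs, rfl⟩
      exact inv_pos.2 (Set.mem_Ioi.1 hs)
    · intro ht
      exact ⟨t⁻¹, inv_pos.2 (Set.mem_Ioi.1 ht), inv_inv t⟩
  rw [e] at h
  rw [h]
  refine lintegral_congr fun t => ?_
  rw [abs_neg, abs_of_nonneg (by positivity)]

lemma inv_qmp : Measure.QuasiMeasurePreserving (fun t : ℝ => t⁻¹) hmeas hmeas := by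
  refine ⟨measurable_inv, ?_⟩
  refine Measure.AbsolutelyContinuous.mk fun s hs h0 => ?_
  rw [Measure.map_apply measurable_inv hs, Measure.restrict_apply (measurable_inv hs)]
  rw [Measure.restrict_apply hs] at h0
  have e : (fun t : ℝ => t⁻¹) ⁻¹' s ∩ Set.Ioi 0 = (fun t : ℝ => t⁻¹) '' (s ∩ Set.Ioi 0) := by
    ext t
    constructor
    · rintro ⟨h1, h2⟩
      exact ⟨t⁻¹, ⟨h1, inv_pos.2 (Set.mem_Ioi.1 h2)⟩, inv_inv t⟩
    · rintro ⟨u, ⟨h1, h2⟩, rfl⟩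
      exact ⟨by simpa using h1, inv_pos.2 (Set.mem_Ioi.1 h2)⟩
  rw [e]
  refine addHaar_image_eq_zero_of_differentiableOn_of_addHaar_eq_zero volume (fun t ht => ?_) h0
  exact (hasDerivAt_inv (ne_of_gt ht.2)).differentiableAt.differentiableWithinAt

lemma integral_ind' {u v : ℝ} (hu : 0 ≤ u) (huv : u ≤ v) (g : ℝ → ℝ) {f : ℝ → ℂ}
    (h : ∀ t, 0 < t → t ≠ u → f t = (Set.Ioc u v).indicator (fun t => (g t : ℂ)) t) :
    ∫ t in Set.Ioi (0:ℝ), f t = ((∫ t in u..v, g t : ℝ) : ℂ) := by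
  rw [← integral_ind hu huv g (fun t _ => rfl)]
  refine setIntegral_congr_ae measurableSet_Ioi ?_
  filter_upwards [Measure.ae_ne volume u] with t ht h0
  exact h t h0 ht

lemma case2 {a : ℝ} (ha : 0 < a) (ha1 : a ≠ 1) {b : ℂ} (hb : b.re = 0) {F : ℝ → ℂ} (hF : Cyc a b F) : False := by
  obtain ⟨κ, hκ, hs⟩ := kappa ha ha1
  obtain ⟨p, hp, hpre⟩ : ∃ p : ℂ, p * a + b = p ∧ p.re = 0 := by
    refine ⟨b / ((1 - a : ℝ) : ℂ), ?_, ?_⟩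
    · have : ((1 - a : ℝ) : ℂ) ≠ 0 := by
        exact_mod_cast (sub_ne_zero.2 ha1.symm)
      have h2 : (1 - a : ℂ) ≠ 0 := by simpa using this
      push_cast
      field_simp
      ring
    · rw [Complex.div_ofReal_re, hb, zero_div]
  let m : ℝ → ℂ := fun t => (Real.sin (κ * Real.log t) : ℂ) * cexp (-p * (t + t⁻¹ : ℝ))
  let V : (ℝ → ℂ) → (ℝ → ℂ) := fun H t => H t⁻¹ * (t⁻¹ : ℝ)
  have mmeas : Measurable m := by
    refine Measurable.mul (Complex.measurable_ofReal.comp ?_) (Complex.measurable_exp.comp (measurable_const.mul (Complex.measurable_ofReal.comp ?_)))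
    · exact Real.measurable_sin.comp (measurable_const.mul Real.measurable_log)
    · exact measurable_id.add measurable_inv
  have mle : ∀ t, ‖m t‖ ≤ 1 := by
    intro t
    rw [norm_mul, Complex.norm_exp, Complex.re_mul_ofReal, Complex.neg_re, hpre, neg_zero, zero_mul, Real.exp_zero, mul_one,
      Complex.norm_real]
    exact Real.abs_sin_le_one _
  have Vsq : ∀ F, eLpNorm (V F) 2 hmeas = eLpNorm F 2 hmeas := by
    intro F
    refine (ENNReal.pow_right_strictMono two_ne_zero).injective ?_
    beta_reduce
    rw [eLpNorm_two_sq, eLpNorm_two_sq, ← inv_lintegral (fun t => (‖F t‖₊ : ENNReal) ^ 2)]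
    refine setLIntegral_congr_fun measurableSet_Ioi fun t ht => ?_
    have ht' : (0:ℝ) < t := ht
    have e : (‖((t⁻¹ : ℝ) : ℂ)‖₊ : ENNReal) = ENNReal.ofReal t⁻¹ := by
      rw [← enorm_eq_nnnorm, ← ofReal_norm, Complex.norm_real, Real.norm_of_nonneg (by positivity)]
    simp only [V]
    rw [nnnorm_mul, ENNReal.coe_mul, mul_pow, e, ← ENNReal.ofReal_pow (by positivity), inv_pow, mul_comm]
  have Vm : ∀ F, MemLp F 2 hmeas → MemLp (V F) 2 hmeas := fun F hF => by
    refine ⟨?_, (Vsq F).trans_lt hF.2⟩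
    refine (hF.1.comp_quasiMeasurePreserving inv_qmp).mul ?_
    exact (Complex.measurable_ofReal.comp measurable_inv).aestronglyMeasurable
  have mm : ∀ G, MemLp G 2 hmeas → MemLp (fun t => m t * G t) 2 hmeas := fun G hG => by
    refine hG.mono (mmeas.aestronglyMeasurable.mul hG.1) (Filter.Eventually.of_forall fun t => ?_)
    rw [norm_mul]
    exact mul_le_of_le_one_left (norm_nonneg _) (mle t)
  have hR : 1 < Real.exp κ⁻¹ := Real.one_lt_exp_iff.2 (by positivity)
  have hr : Real.exp (-κ⁻¹) < 1 := Real.exp_lt_one_iff.2 (by simpa using hκ)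
  have hr0 := Real.exp_pos (-κ⁻¹)
  have hrR : Real.exp (-κ⁻¹) = (Real.exp κ⁻¹)⁻¹ := Real.exp_neg _
  have sp := sin_pos' hκ
  have sn := sin_neg' hκ
  set R := Real.exp κ⁻¹ with hRdef
  set r := Real.exp (-κ⁻¹) with hrdef
  have key := symm_crit ha hb.ge hF (D := fun G H => ∫ t in Set.Ioi (0:ℝ), (m t * G t) * V H t)
    (fun G hG => BL_V (fun F G => by ext t; simp [V, add_mul]) (fun c F => by ext t; simp [V, mul_assoc]) Vm (fun F hF => by
      rw [nn, nn, Vsq]) (mm G hG))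
    (fun G hG => by
      have := BL_mul (mm _ (Vm G hG))
      convert this using 3
      congr 1
      ext t
      ring) (fun G H => by
      beta_reduce
      rw [← integral_scale (fun t => (m t * G t) * V (TT a b H) t) ha]
      refine setIntegral_congr_fun measurableSet_Ioi fun t ht => ?_
      have ht1 : (0:ℝ) < t := ht
      have ht0 : (0:ℝ) < a⁻¹ * t := mul_pos (inv_pos.2 ha) ht
      have h1 := hs _ ht0
      rw [← mul_assoc, mul_inv_cancel₀ ha.ne', one_mul] at h1
      have ha' : (a : ℂ) ≠ 0 := by exact_mod_cast ha.ne'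
      have ht' : (t : ℂ) ≠ 0 := by exact_mod_cast ht1.ne'
      have e0 : a⁻¹ * (a⁻¹ * t)⁻¹ = t⁻¹ := by field_simp
      simp only [TT, m, V]
      rw [h1, e0]
      have h2 : cexp (-p * (t + t⁻¹ : ℝ)) * cexp (-b * (a⁻¹ * t : ℝ)) =
         cexp (-p * (a⁻¹ * t + (a⁻¹ * t)⁻¹ : ℝ)) * cexp (-b * (t⁻¹ : ℝ)) := by
        rw [← Complex.exp_add, ← Complex.exp_add]
        congr 1
        have hb' : b = p - p * a := by linear_combination hp
        rw [hb']
        push_cast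
        field_simp
        ring
      have e1 : (((a⁻¹ * t)⁻¹ : ℝ) : ℂ) = a * (t⁻¹ : ℝ) := by push_cast; field_simp
      rw [e1]
      calc _ = (Real.sin (κ * Real.log (a⁻¹ * t)) : ℂ) * (cexp (-p * (t + t⁻¹ : ℝ)) * cexp (-b * (a⁻¹ * t : ℝ))) *
            ((a:ℂ)⁻¹ * G (a⁻¹ * t) * H t⁻¹ * (t⁻¹ : ℝ)) := by ring
        _ = _ := by
          rw [h2]
          field_simp)
    ((Set.Ioc 1 R).indicator fun t => cexp (p * t)) ((Set.Ioc 0 1).indicator fun t => cexp (p * t))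
    (memLp_ind (by fun_prop)) (memLp_ind (by fun_prop))
  have ee : ∀ t : ℝ, cexp (-p * (t + t⁻¹ : ℝ)) * cexp (p * t) * cexp (p * (t⁻¹ : ℝ)) = 1 := fun t => by
    rw [← Complex.exp_add, ← Complex.exp_add, Complex.exp_eq_one_iff]
    refine ⟨0, ?_⟩
    push_cast
    ring
  have main : ∀ t, m t * cexp (p * t) * (cexp (p * (t⁻¹ : ℝ)) * (t⁻¹ : ℝ)) = ((Real.sin (κ * Real.log t) * t⁻¹ : ℝ) : ℂ) := by
    intro t
    simp only [m]
    calc _ = (Real.sin (κ * Real.log t) : ℂ) * (cexp (-p * (t + t⁻¹ : ℝ)) * cexp (p * t) * cexp (p * (t⁻¹ : ℝ))) * (t⁻¹ : ℝ) := by ring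
      _ = _ := by rw [ee, mul_one, Complex.ofReal_mul]
  beta_reduce at key
  rw [integral_ind' zero_le_one hR.le (fun t => Real.sin (κ * Real.log t) * t⁻¹),
    integral_ind' hr0.le hr.le (fun t => Real.sin (κ * Real.log t) * t⁻¹)] at key
  · have : (∫ t in (1:ℝ)..R, Real.sin (κ * Real.log t) * t⁻¹) = ∫ t in r..1, Real.sin (κ * Real.log t) * t⁻¹ := by
      exact_mod_cast key
    linarith
  · intro t ht htr
    by_cases h : t ∈ Set.Ioc r 1
    · have h7 : t ∈ Set.Ioc (0:ℝ) 1 := ⟨ht, h.2⟩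
      rw [Set.indicator_of_mem h, Set.indicator_of_mem h7, ← main]
      by_cases h1 : t = 1
      · subst h1
        simp [m]
      · have h2 : t⁻¹ ∈ Set.Ioc 1 R := by
          refine ⟨(one_lt_inv₀ ht).2 (lt_of_le_of_ne h.2 h1), ?_⟩
          rw [inv_le_comm₀ ht (by linarith), ← hrR]
          exact h.1.le
        simp only [V]
        rw [Set.indicator_of_mem h2]
    · rw [Set.indicator_of_notMem h]
      by_cases h1 : t ∈ Set.Ioc (0:ℝ) 1
      · have h2 : t⁻¹ ∉ Set.Ioc 1 R := by
          intro h3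
          have h4 := h3.2
          rw [inv_le_comm₀ ht (by linarith), ← hrR] at h4
          exact h ⟨lt_of_le_of_ne h4 (Ne.symm htr), h1.2⟩
        simp [V, Set.indicator_of_notMem h2]
      · simp [Set.indicator_of_notMem h1]
  · intro t ht _
    by_cases h : t ∈ Set.Ioc 1 R
    · have h2 : t⁻¹ ∈ Set.Ioc (0:ℝ) 1 := ⟨inv_pos.2 ht, inv_le_one_of_one_le₀ h.1.le⟩
      simp only [V]
      rw [Set.indicator_of_mem h, Set.indicator_of_mem h, Set.indicator_of_mem h2, ← main]
    · simp [Set.indicator_of_notMem h]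

lemma nec {a : ℝ} (ha : 0 < a) {b : ℂ} (hb : 0 ≤ b.re) {φ : ℂ → ℂ} (hφ : ∀ w, φ w = (a : ℂ) * w + b)
    {f : ℂ → ℂ} (hf : MemH2 f) (hc : ∀ g : ℂ → ℂ, MemH2 g → ∀ ε : ℝ, 0 < ε →
          ∃ h ∈ Submodule.span ℂ (Set.range fun n : ℕ => f ∘ φ^[n]),
            H2normSq (g - h) < ENNReal.ofReal ε ^ 2) : 1 ≤ a ∧ 0 < b.re := by
  obtain ⟨F, hF⟩ := transfer ha hb hφ hf hc
  by_contra hcon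
  rcases hb.eq_or_lt with h0 | h0
  · by_cases h1 : a = 1
    · subst h1
      exact case1 h0.symm hF
    · exact case2 ha h1 h0.symm hF
  · refine case3 ha ?_ h0 hF
    by_contra h
    exact hcon ⟨not_lt.1 h, h0⟩

/-- Characterization of cyclicity of affine composition operators on `H²(ℂ₊)`:
`C_φ` with `φ(w) = aw + b` is cyclic iff `a ≥ 1` and `Re b > 0`. -/
theorem cyclic_iff (a : ℝ) (ha : 0 < a) (b : ℂ) (hb : 0 ≤ b.re)
    (φ : ℂ → ℂ) (hφ : ∀ w, φ w = (a : ℂ) * w + b) :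
    (∃ f : ℂ → ℂ, MemH2 f ∧
        ∀ g : ℂ → ℂ, MemH2 g → ∀ ε : ℝ, 0 < ε →
          ∃ h ∈ Submodule.span ℂ (Set.range fun n : ℕ => f ∘ φ^[n]),
            H2normSq (g - h) < ENNReal.ofReal ε ^ 2) ↔
      1 ≤ a ∧ 0 < b.re := by
  constructor
  · rintro ⟨f, hf, hc⟩
    exact nec ha hb hφ hf hc
  · rintro ⟨h1, h2⟩
    exact suff a b φ hφ h1 h2
end

section
/- (No hypercyclicity.) Let a > 0 be real and b ∈ ℂ with Re(b) ≥ 0, and let φ(w) = a·w + b, an affine self-map of ℂ₊. Then the composition operator C_φ is not hypercyclic on H²(ℂ₊): there is no f ∈ H²(ℂ₊) whose orbit {f ∘ φ^[n] : n ∈ ℕ} is itself dense in H²(ℂ₊), i.e. for every f ∈ H²(ℂ₊) there exist g ∈ H²(ℂ₊) and ε > 0 such that ‖g − f ∘ φ^[n]‖ ≥ ε for every n ∈ ℕ. -/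
open Complex MeasureTheory

lemma nh_line_cont (f : ℂ → ℂ) (hf : MemH2 f) (X c d : ℝ) (hX : 0 < X) :
    Continuous (fun y : ℝ => f ((X : ℂ) + ((c * y + d : ℝ) : ℂ) * Complex.I)) := by
  have h1 : ContinuousOn f {w : ℂ | 0 < w.re} := hf.1.continuousOn
  refine h1.comp_continuous (by fun_prop) ?_
  intro y
  simpa using hX

lemma nh_scale (F : ℝ → ENNReal) (hF : Measurable F) (c d : ℝ) (hc : 0 < c) :
    ∫⁻ y : ℝ, F (c * y + d) = ENNReal.ofReal c⁻¹ * ∫⁻ y : ℝ, F y := by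
  have h1 : ∫⁻ y : ℝ, F (c * y + d) = ∫⁻ y, F (y + d) ∂(Measure.map (c * ·) volume) := by
    rw [lintegral_map (by fun_prop) (by fun_prop)]
  rw [h1, Real.map_volume_mul_left hc.ne', lintegral_smul_measure,
    lintegral_add_right_eq_self (fun y => F y) d, abs_of_pos (inv_pos.2 hc)]
  rfl

lemma nh_iter (a : ℝ) (ha : 0 < a) (b : ℂ) (hb : 0 ≤ b.re)
    (φ : ℂ → ℂ) (hφ : ∀ w, φ w = (a : ℂ) * w + b) (n : ℕ) :
    ∃ B : ℂ, 0 ≤ B.re ∧ B.re * (1 - a) = b.re * (1 - a ^ n) ∧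
      ∀ w, φ^[n] w = ((a ^ n : ℝ) : ℂ) * w + B := by
  induction n with
  | zero => exact ⟨0, by simp⟩
  | succ n ih =>
    obtain ⟨B, h1, h2, h3⟩ := ih
    refine ⟨a * B + b, ?_, ?_, ?_⟩
    · simp; positivity
    · simp
      rw [pow_succ]
      linear_combination a * h2
    · intro w
      rw [Function.iterate_succ_apply', h3, hφ]
      push_cast
      ring

lemma nh_line (a : ℝ) (f : ℂ → ℂ) (hf : MemH2 f) (c : ℝ) (hc : 0 < c) (B : ℂ) (hB : 0 ≤ B.re)
    (ψ : ℂ → ℂ) (hψ : ∀ w, ψ w = (c : ℂ) * w + B) (x : ℝ) (hx : 0 < x) :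
    Continuous (fun y : ℝ => f (ψ ((x : ℂ) + (y : ℂ) * Complex.I))) ∧
    ∫⁻ y : ℝ, (‖f (ψ ((x : ℂ) + (y : ℂ) * Complex.I))‖₊ : ENNReal) ^ 2 =
      ENNReal.ofReal c⁻¹ * ∫⁻ y : ℝ,
        (‖f (((c * x + B.re : ℝ) : ℂ) + (y : ℂ) * Complex.I)‖₊ : ENNReal) ^ 2 := by
  have hX : 0 < c * x + B.re := by positivity
  have key : ∀ y : ℝ, ψ ((x : ℂ) + (y : ℂ) * Complex.I) =
      ((c * x + B.re : ℝ) : ℂ) + ((c * y + B.im : ℝ) : ℂ) * Complex.I := by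
    intro y
    rw [hψ]
    apply Complex.ext <;> simp
  simp_rw [key]
  refine ⟨nh_line_cont f hf _ _ _ hX, ?_⟩
  have h0 := nh_line_cont f hf _ 1 0 hX
  simp only [one_mul, add_zero] at h0
  exact nh_scale (fun y => (‖f (((c * x + B.re : ℝ) : ℂ) + (y : ℂ) * Complex.I)‖₊ : ENNReal) ^ 2)
    (h0.measurable.nnnorm.coe_nnreal_ennreal.pow_const 2) c B.im hc

lemma nh_tri (u v : ℝ → ℂ) (hu : Continuous u) (hv : Continuous v) :
    ∫⁻ y, (‖u y‖₊ : ENNReal) ^ 2 ≤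
      2 * (∫⁻ y, (‖u y - v y‖₊ : ENNReal) ^ 2) + 2 * ∫⁻ y, (‖v y‖₊ : ENNReal) ^ 2 := by
  have m1 : Measurable (fun y => (‖u y - v y‖₊ : ENNReal) ^ 2) := by
    have := (hu.sub hv).measurable
    fun_prop
  have m2 : Measurable (fun y => (‖v y‖₊ : ENNReal) ^ 2) := by
    have := hv.measurable
    fun_prop
  rw [← lintegral_const_mul _ m1, ← lintegral_const_mul _ m2,
    ← lintegral_add_left (m1.const_mul 2)]
  refine lintegral_mono fun y => ?_
  have h : ‖u y‖₊ ^ 2 ≤ 2 * ‖u y - v y‖₊ ^ 2 + 2 * ‖v y‖₊ ^ 2 := by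
    rw [← NNReal.coe_le_coe]
    push_cast
    have h1 : ‖u y‖ ≤ ‖u y - v y‖ + ‖v y‖ := by
      simpa using norm_add_le (u y - v y) (v y)
    nlinarith [norm_nonneg (u y), sq_nonneg (‖u y - v y‖ - ‖v y‖)]
  have hh := ENNReal.coe_le_coe.2 h
  push_cast at hh
  exact hh

/-- Test functions. -/
noncomputable def nhG (K : ℕ) (w : ℂ) : ℂ := K / (w + 1)

lemma nhG_ne (x : ℝ) (hx : 0 < x) (y : ℝ) : (x : ℂ) + (y : ℂ) * Complex.I + 1 ≠ 0 := by
  intro h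
  have := congrArg Complex.re h
  simp at this
  linarith

lemma nhG_cont (K : ℕ) (x : ℝ) (hx : 0 < x) :
    Continuous (fun y : ℝ => nhG K ((x : ℂ) + (y : ℂ) * Complex.I)) := by
  unfold nhG
  exact Continuous.div (by fun_prop) (by fun_prop) (nhG_ne x hx)

lemma nhG_int (K : ℕ) (x : ℝ) (hx : 0 < x) :
    ∫⁻ y : ℝ, (‖nhG K ((x : ℂ) + (y : ℂ) * Complex.I)‖₊ : ENNReal) ^ 2 =
      (K : ENNReal) ^ 2 * ∫⁻ y : ℝ, (‖nhG 1 ((x : ℂ) + (y : ℂ) * Complex.I)‖₊ : ENNReal) ^ 2 := by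
  have m : Measurable (fun y : ℝ => (‖nhG 1 ((x : ℂ) + (y : ℂ) * Complex.I)‖₊ : ENNReal) ^ 2) := by
    have := (nhG_cont 1 x hx).measurable
    fun_prop
  rw [← lintegral_const_mul _ m]
  congr 1
  ext y
  rw [← mul_pow]
  congr 1
  have : ‖nhG K ((x : ℂ) + (y : ℂ) * Complex.I)‖₊ =
      (K : NNReal) * ‖nhG 1 ((x : ℂ) + (y : ℂ) * Complex.I)‖₊ := by
    simp [nhG, div_eq_mul_inv]
  rw [this]
  push_cast
  rfl

lemma nhG_pos (x : ℝ) (hx : 0 < x) :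
    ∫⁻ y : ℝ, (‖nhG 1 ((x : ℂ) + (y : ℂ) * Complex.I)‖₊ : ENNReal) ^ 2 ≠ 0 := by
  have m : Measurable (fun y : ℝ => (‖nhG 1 ((x : ℂ) + (y : ℂ) * Complex.I)‖₊ : ENNReal) ^ 2) := by
    have := (nhG_cont 1 x hx).measurable
    fun_prop
  intro h
  rw [lintegral_eq_zero_iff m] at h
  obtain ⟨y, hy⟩ := h.exists
  have := nhG_ne x hx y
  simp [nhG, this] at hy

lemma nhG_mem (K : ℕ) : MemH2 (nhG K) := by
  constructor
  · unfold nhG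
    intro w hw
    have hw' : 0 < w.re := hw
    have : w + 1 ≠ 0 := by
      intro h
      have := congrArg Complex.re h
      simp at this
      linarith
    have hd : DifferentiableAt ℂ (fun z : ℂ => (K : ℂ) / (z + 1)) w := by
      fun_prop (disch := exact this)
    exact hd.differentiableWithinAt
  · have hI : ∫⁻ y : ℝ, ENNReal.ofReal ((1 + y ^ 2)⁻¹) < ⊤ :=
      integrable_inv_one_add_sq.lintegral_lt_top
    refine lt_of_le_of_lt (b := (K : ENNReal) ^ 2 * ∫⁻ y : ℝ, ENNReal.ofReal ((1 + y ^ 2)⁻¹)) ?_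
      (ENNReal.mul_lt_top (by simp) hI)
    refine iSup₂_le fun x hx => ?_
    have hx' : 0 < x := hx
    rw [nhG_int K x hx]
    gcongr with y
    rw [← enorm_eq_nnnorm, ← ofReal_norm, ← ENNReal.ofReal_pow (norm_nonneg _)]
    apply ENNReal.ofReal_le_ofReal
    simp only [nhG, Nat.cast_one, one_div, norm_inv, inv_pow]
    rw [← Complex.normSq_eq_norm_sq, Complex.normSq_apply]
    apply inv_anti₀ (by positivity)
    simp
    nlinarith

lemma nh_eps (t : ENNReal) (ht : t ≠ 0) : ∃ ε : ℝ, 0 < ε ∧ ENNReal.ofReal ε ^ 2 ≤ t := by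
  obtain ⟨r, h1, h2⟩ := ENNReal.lt_iff_exists_nnreal_btwn.1 (lt_min (pos_iff_ne_zero.2 ht) one_pos)
  refine ⟨r, by exact_mod_cast h1, ?_⟩
  rw [ENNReal.ofReal_coe_nnreal]
  have h3 : (r : ENNReal) ≤ 1 := h2.le.trans (min_le_right _ _)
  calc (r : ENNReal) ^ 2 ≤ r := by rw [sq]; exact mul_le_of_le_one_left' h3
    _ ≤ t := h2.le.trans (min_le_left _ _)

lemma nh_le_norm (f : ℂ → ℂ) (x : ℝ) (hx : 0 < x) :
    ∫⁻ y : ℝ, (‖f ((x : ℂ) + (y : ℂ) * Complex.I)‖₊ : ENNReal) ^ 2 ≤ H2normSq f :=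
  le_iSup₂ (f := fun (x : ℝ) (_ : x ∈ Set.Ioi (0 : ℝ)) =>
    ∫⁻ y : ℝ, (‖f ((x : ℂ) + (y : ℂ) * Complex.I)‖₊ : ENNReal) ^ 2) x hx

/-- No affine composition operator on `H²(ℂ₊)` is hypercyclic: no `f ∈ H²(ℂ₊)`
has dense orbit `{f ∘ φ^[n] : n ∈ ℕ}`. -/
theorem not_hypercyclic (a : ℝ) (ha : 0 < a) (b : ℂ) (hb : 0 ≤ b.re)
    (φ : ℂ → ℂ) (hφ : ∀ w, φ w = (a : ℂ) * w + b)
    (f : ℂ → ℂ) (hf : MemH2 f) :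
    ∃ g : ℂ → ℂ, MemH2 g ∧ ∃ ε : ℝ, 0 < ε ∧
      ∀ n : ℕ, ENNReal.ofReal ε ^ 2 ≤ H2normSq (g - f ∘ φ^[n]) := by
  rcases le_or_gt 1 a with h1 | h1
  · set G := ∫⁻ y : ℝ, (‖nhG 1 (((1 : ℝ) : ℂ) + (y : ℂ) * Complex.I)‖₊ : ENNReal) ^ 2 with hG
    have hG0 : G ≠ 0 := nhG_pos 1 one_pos
    have hM : 2 * 1 + 2 * H2normSq f ≠ ⊤ := by
      have := hf.2.ne
      finiteness
    obtain ⟨K, hK⟩ := ENNReal.exists_nat_mul_gt hG0 hM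
    refine ⟨nhG K, nhG_mem K, 1, one_pos, fun n => ?_⟩
    obtain ⟨B, hB, -, hit⟩ := nh_iter a ha b hb φ hφ n
    obtain ⟨hc, hl⟩ := nh_line a f hf (a ^ n) (by positivity) B hB _ hit 1 one_pos
    have ht := nh_tri _ _ (nhG_cont K 1 one_pos) hc
    rw [nhG_int K 1 one_pos, ← hG, hl] at ht
    have hle := nh_le_norm (nhG K - f ∘ φ^[n]) 1 one_pos
    simp only [ENNReal.ofReal_one, one_pow]
    refine le_trans ?_ hle
    by_contra hlt
    rw [not_le] at hlt
    have h2 : ENNReal.ofReal (a ^ n)⁻¹ * ∫⁻ y : ℝ,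
        (‖f (((a ^ n * 1 + B.re : ℝ) : ℂ) + (y : ℂ) * Complex.I)‖₊ : ENNReal) ^ 2
        ≤ H2normSq f := by
      refine le_trans (mul_le_of_le_one_left' ?_) (nh_le_norm f _ (by positivity))
      rw [← ENNReal.ofReal_one]
      exact ENNReal.ofReal_le_ofReal (inv_le_one_of_one_le₀ (one_le_pow₀ h1))
    have h3 : (K : ENNReal) ^ 2 * G ≤ 2 * 1 + 2 * H2normSq f := by
      refine ht.trans (add_le_add ?_ ?_)
      · exact mul_le_mul_right hlt.le 2
      · exact mul_le_mul_right h2 2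
    have h4 : (K : ENNReal) * G ≤ (K : ENNReal) ^ 2 * G := by
      have : (K : ENNReal) ≤ (K : ENNReal) ^ 2 := by
        exact_mod_cast Nat.le_self_pow two_ne_zero K
      gcongr
    exact absurd (hK.trans_le (h4.trans h3)) (lt_irrefl _)
  · set P := b.re / (1 - a) with hP
    have h1a : 0 < 1 - a := by linarith
    have hP0 : 0 ≤ P := by positivity
    have hBP : ∀ n (B : ℂ), B.re * (1 - a) = b.re * (1 - a ^ n) → B.re = P * (1 - a ^ n) := by
      intro n B h
      rw [hP]; field_simp; linarith
    by_cases hex : ∃ x1 : ℝ, P < x1 ∧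
        ∫⁻ y : ℝ, (‖f ((x1 : ℂ) + (y : ℂ) * Complex.I)‖₊ : ENNReal) ^ 2 ≠ 0
    · obtain ⟨x1, hx1, hne⟩ := hex
      obtain ⟨ε, hε, hle⟩ := nh_eps _ hne
      refine ⟨nhG 0, nhG_mem 0, ε, hε, fun n => hle.trans ?_⟩
      obtain ⟨B, hB, hB2, hit⟩ := nh_iter a ha b hb φ hφ n
      have han : 0 < a ^ n := by positivity
      have hBr := hBP n B hB2
      have hx : 0 < (x1 - B.re) / a ^ n := by
        apply div_pos _ han
        nlinarith
      obtain ⟨hc, hl⟩ := nh_line a f hf (a ^ n) han B hB _ hit _ hx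
      have he : a ^ n * ((x1 - B.re) / a ^ n) + B.re = x1 := by field_simp; ring
      rw [he] at hl
      refine le_trans ?_ (nh_le_norm (nhG 0 - f ∘ φ^[n]) _ hx)
      have : ∀ w, ‖(nhG 0 - f ∘ φ^[n]) w‖₊ = ‖f (φ^[n] w)‖₊ := by
        intro w; simp [nhG]
      simp_rw [this]
      rw [hl]
      refine le_mul_of_one_le_left' ?_
      rw [← ENNReal.ofReal_one]
      exact ENNReal.ofReal_le_ofReal ((one_le_inv₀ han).2 (pow_le_one₀ ha.le h1.le))
    · push Not at hex
      have hx0 : 0 < P + 1 := by linarith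
      set G := ∫⁻ y : ℝ, (‖nhG 1 (((P + 1 : ℝ) : ℂ) + (y : ℂ) * Complex.I)‖₊ : ENNReal) ^ 2 with hG
      have hG0 : G ≠ 0 := nhG_pos _ hx0
      obtain ⟨ε, hε, hle⟩ := nh_eps (G / 2) (by simp [hG0])
      refine ⟨nhG 1, nhG_mem 1, ε, hε, fun n => hle.trans ?_⟩
      obtain ⟨B, hB, hB2, hit⟩ := nh_iter a ha b hb φ hφ n
      have han : 0 < a ^ n := by positivity
      have hBr := hBP n B hB2
      obtain ⟨hc, hl⟩ := nh_line a f hf (a ^ n) han B hB _ hit _ hx0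
      rw [hex _ (by rw [hBr]; nlinarith)] at hl
      have ht := nh_tri _ _ (nhG_cont 1 _ hx0) hc
      rw [← hG, hl] at ht
      simp only [mul_zero, add_zero] at ht
      refine le_trans ?_ (nh_le_norm (nhG 1 - f ∘ φ^[n]) _ hx0)
      exact ENNReal.div_le_of_le_mul' ht
end
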